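/- Let n ≥ 5, p ≥ 1 and 1 < s < (n+4)/(n−4). If U = (u_1, …, u_p) : ℝ^n → ℝ^p is a nonnegative C⁴ solution of Δ² u_i = |U|^{s−1} u_i on all of ℝ^n for every i = 1, …, p, then U ≡ 0. -/

import Mathlib

open MeasureTheory Metric Filter Topology

/-- The Euclidean Laplacian: sum of second partial derivatives. -/
noncomputable def lap {n : ℕ} (u : EuclideanSpace ℝ (Fin n) → ℝ)
    (x : EuclideanSpace ℝ (Fin n)) : ℝ :=
  ∑ i : Fin n,
    fderiv ℝ (fun y => fderiv ℝ u y (EuclideanSpace.single i 1)) x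
      (EuclideanSpace.single i 1)

/-- The bi-Laplacian Δ² = Δ ∘ Δ. -/
noncomputable def bilap {n : ℕ} (u : EuclideanSpace ℝ (Fin n) → ℝ) :
    EuclideanSpace ℝ (Fin n) → ℝ :=
  lap (lap u)

/-- The pointwise Euclidean norm |U(x)| of a p-map U. -/
noncomputable def vnorm {n p : ℕ} (U : Fin p → EuclideanSpace ℝ (Fin n) → ℝ)
    (x : EuclideanSpace ℝ (Fin n)) : ℝ :=
  Real.sqrt (∑ i, U i x ^ 2)

/-!
Pairing the equation with a power of `1 - |x|²` on the unit ball and absorbing by Young's inequality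
(the test-function method of Mitidieri and Pokhozhaev) gives a bound independent of the solution;
rescaling it shows that the averages of `uᵢ` over balls of radius `R` vanish as `R → ∞`. This
leaves no room for a boundary term and yields `uᵢ(x) = c⁻¹ ∫ Δ²uᵢ(z) / |x - z|ⁿ⁻⁴ dz`, with no
assumption on the sign of `Δuᵢ`.

The integral equation is then treated by moving spheres. If every `uⱼ` dominates its Kelvin
transform in the sphere of radius `l`, subcriticality makes `Δ²uᵢ` strictly dominate its own, and
the positivity of the reflected kernel turns this into a quantitative gap for `uᵢ`, so that `l` can
be increased. Hence domination holds for all spheres about all centres, and letting these degenerate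
to half-spaces shows that `U` is constant, thus zero.
-/

section Bump

variable {E : Type*} [NormedAddCommGroup E]

/-- The cutoff `(1 - ‖y‖²)₊ᵐ`, which is supported in the closed unit ball when `m ≠ 0`. Larger
powers are smoother, and its derivatives are again of this type. -/
noncomputable def bump (m : ℕ) (y : E) : ℝ := (max (1 - ‖y‖ ^ 2) 0) ^ m

lemma continuous_bump (m : ℕ) : Continuous (bump (E := E) m) := by
  unfold bump
  fun_prop

lemma bump_nonneg (m : ℕ) (y : E) : 0 ≤ bump m y := by
  unfold bump
  positivity

lemma bump_antitone (y : E) : Antitone fun m => bump m y := fun _ _ h =>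
  pow_le_pow_of_le_one (le_max_right _ _) (max_le (by linarith [sq_nonneg ‖y‖]) zero_le_one) h

lemma bump_le_one (m : ℕ) (y : E) : bump m y ≤ 1 := by
  simpa [bump] using bump_antitone y (Nat.zero_le m)

lemma bump_eq_zero {m : ℕ} (hm : m ≠ 0) {y : E} (hy : 1 ≤ ‖y‖) : bump m y = 0 := by
  rw [bump, max_eq_right (by nlinarith), zero_pow hm]

lemma norm_sq_mul_bump {m : ℕ} (hm : m ≠ 0) (y : E) :
    ‖y‖ ^ 2 * bump m y = bump m y - bump (m + 1) y := by
  unfold bump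
  rcases le_total (1 - ‖y‖ ^ 2) 0 with h | h
  · simp [max_eq_right h, hm]
  · rw [max_eq_left h]
    ring

lemma hasCompactSupport_bump [ProperSpace E] {m : ℕ} (hm : m ≠ 0) :
    HasCompactSupport (bump (E := E) m) :=
  .intro (isCompact_closedBall 0 1) fun y hy =>
    bump_eq_zero hm (by simpa using (not_le.1 (mt mem_closedBall.2 hy)).le)

lemma hasDerivAt_max_zero_pow {m : ℕ} (hm : m ≠ 0) (t : ℝ) :
    HasDerivAt (fun s : ℝ => max s 0 ^ (m + 1)) ((m + 1) * max t 0 ^ m) t := by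
  rcases lt_trichotomy t 0 with ht | rfl | ht
  · have h : (fun s : ℝ => max s 0 ^ (m + 1)) =ᶠ[𝓝 t] fun _ => 0 := by
      filter_upwards [Iio_mem_nhds ht] with s hs
      simp [max_eq_right (Set.mem_Iio.1 hs).le]
    simpa [max_eq_right ht.le, hm] using (hasDerivAt_const t (0 : ℝ)).congr_of_eventuallyEq h
  · have h : (fun s : ℝ => max s 0 ^ (m + 1)) =O[𝓝 0] fun s => ‖s - 0‖ ^ (m + 1) := by
      refine Asymptotics.IsBigO.of_bound 1 (Eventually.of_forall fun s => ?_)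
      rw [norm_pow, norm_pow, one_mul, sub_zero, norm_norm, Real.norm_of_nonneg (le_max_right _ _)]
      gcongr
      exact max_le (le_abs_self s) (abs_nonneg s)
    have h' := (h.hasFDerivAt (𝕜 := ℝ) (by omega)).hasDerivAt
    simpa [hm] using h'
  · have h : (fun s : ℝ => max s 0 ^ (m + 1)) =ᶠ[𝓝 t] fun s => s ^ (m + 1) := by
      filter_upwards [Ioi_mem_nhds ht] with s hs
      rw [max_eq_left (Set.mem_Ioi.1 hs).le]
    simpa [max_eq_left ht.le] using (hasDerivAt_pow (m + 1) t).congr_of_eventuallyEq h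

variable [InnerProductSpace ℝ E]

lemma hasFDerivAt_bump {m : ℕ} (hm : m ≠ 0) (y : E) :
    HasFDerivAt (bump (m + 1)) (-(2 * (m + 1) * bump m y) • innerSL ℝ y) y := by
  have h : HasFDerivAt (fun y : E => 1 - ‖y‖ ^ 2) (-(2 • innerSL ℝ y)) y :=
    (hasStrictFDerivAt_norm_sq y).hasFDerivAt.const_sub 1
  refine ((hasDerivAt_max_zero_pow hm (1 - ‖y‖ ^ 2)).comp_hasFDerivAt y h).congr_fderiv ?_
  ext v
  simp [bump]
  ring

lemma fderiv_bump {m : ℕ} (hm : m ≠ 0) (y v : E) :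
    fderiv ℝ (bump (m + 1)) y v = -(2 * (m + 1) * bump m y) * inner ℝ y v := by
  simp [(hasFDerivAt_bump hm y).fderiv]

lemma contDiff_one_bump {m : ℕ} (hm : m ≠ 0) : ContDiff ℝ 1 (bump (E := E) (m + 1)) := by
  refine contDiff_one_iff_fderiv.2 ⟨fun y => (hasFDerivAt_bump hm y).differentiableAt, ?_⟩
  rw [show fderiv ℝ (bump (m + 1)) = _ from funext fun y => (hasFDerivAt_bump hm y).fderiv]
  have := continuous_bump (E := E) m
  fun_prop

lemma sum_apply_mul_inner {ι : Type*} [Fintype ι] (b : OrthonormalBasis ι ℝ E) (L : E →L[ℝ] ℝ)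
    (y : E) : ∑ i, L (b i) * inner ℝ (b i) y = L y := by
  conv_rhs => rw [← b.sum_repr' y]
  simp [mul_comm]

lemma sum_fderiv_mul_inner {ι : Type*} [Fintype ι] (b : OrthonormalBasis ι ℝ E) {v : E → ℝ}
    {y : E} (hv : DifferentiableAt ℝ v y) :
    ∑ i, fderiv ℝ (fun y => v y * inner ℝ (b i) y) y (b i) =
      fderiv ℝ v y y + Fintype.card ι * v y := by
  have h (i) : fderiv ℝ (fun y => v y * inner ℝ (b i) y) y (b i) =
      fderiv ℝ v y (b i) * inner ℝ (b i) y + v y := by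
    have h' : HasFDerivAt (fun y => v y * inner ℝ (b i) y) _ y :=
      hv.hasFDerivAt.mul (innerSL ℝ (b i)).hasFDerivAt
    simp [h'.fderiv, b.norm_eq_one, mul_comm, add_comm]
  simp only [h, Finset.sum_add_distrib, sum_apply_mul_inner, Finset.sum_const, Finset.card_univ,
    nsmul_eq_mul]

lemma continuous_fderiv_self {v : E → ℝ} (hv : ContDiff ℝ 1 v) :
    Continuous fun y => fderiv ℝ v y y :=
  (hv.continuous_fderiv one_ne_zero).clm_apply continuous_id

variable [FiniteDimensional ℝ E] [MeasurableSpace E] [BorelSpace E]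

lemma integrable_mul_bump {m : ℕ} (hm : m ≠ 0) {v : E → ℝ} (hv : Continuous v) :
    Integrable fun y => v y * bump m y :=
  (hv.mul (continuous_bump m)).integrable_of_hasCompactSupport (hasCompactSupport_bump hm).mul_left

/-- The integral of `v` against the cutoff `bump m`. -/
noncomputable def bumpIntegral (m : ℕ) (v : E → ℝ) : ℝ := ∫ y, v y * bump m y

lemma bumpIntegral_const_mul (m : ℕ) (a : ℝ) (v : E → ℝ) :
    bumpIntegral m (fun y => a * v y) = a * bumpIntegral m v := by
  simp only [bumpIntegral, mul_assoc, integral_const_mul]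

lemma bumpIntegral_add {m : ℕ} (hm : m ≠ 0) {v w : E → ℝ} (hv : Continuous v)
    (hw : Continuous w) :
    bumpIntegral m (fun y => v y + w y) = bumpIntegral m v + bumpIntegral m w := by
  simp only [bumpIntegral, add_mul]
  exact integral_add (integrable_mul_bump hm hv) (integrable_mul_bump hm hw)

lemma bumpIntegral_norm_sq_mul {m : ℕ} (hm : m ≠ 0) {v : E → ℝ} (hv : Continuous v) :
    bumpIntegral m (fun y => ‖y‖ ^ 2 * v y) = bumpIntegral m v - bumpIntegral (m + 1) v := by
  have h (y : E) : ‖y‖ ^ 2 * v y * bump m y = v y * bump m y - v y * bump (m + 1) y := by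
    linear_combination v y * norm_sq_mul_bump hm y
  simp only [bumpIntegral, h]
  exact integral_sub (integrable_mul_bump hm hv) (integrable_mul_bump m.succ_ne_zero hv)

lemma bumpIntegral_nonneg (m : ℕ) {v : E → ℝ} (hv : ∀ y, 0 ≤ v y) : 0 ≤ bumpIntegral m v :=
  integral_nonneg fun y => mul_nonneg (hv y) (bump_nonneg m y)

lemma bumpIntegral_mono {m : ℕ} (hm : m ≠ 0) {v w : E → ℝ} (hv : Continuous v)
    (hw : Continuous w) (h : ∀ y, v y ≤ w y) : bumpIntegral m v ≤ bumpIntegral m w :=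
  integral_mono (integrable_mul_bump hm hv) (integrable_mul_bump hm hw) fun y =>
    mul_le_mul_of_nonneg_right (h y) (bump_nonneg m y)

lemma bumpIntegral_antitone {i j : ℕ} (hi : i ≠ 0) (hij : i ≤ j) {v : E → ℝ}
    (hv : Continuous v) (h0 : ∀ y, 0 ≤ v y) : bumpIntegral j v ≤ bumpIntegral i v :=
  integral_mono (integrable_mul_bump (by omega) hv) (integrable_mul_bump hi hv) fun y =>
    mul_le_mul_of_nonneg_left (bump_antitone y hij) (h0 y)

lemma integral_fderiv_apply_mul {v g : E → ℝ} (hv : ContDiff ℝ 1 v) (hg : ContDiff ℝ 1 g)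
    (hgs : HasCompactSupport g) (e : E) :
    ∫ y, fderiv ℝ v y e * g y = -∫ y, v y * fderiv ℝ g y e := by
  have hv' : Continuous fun y => fderiv ℝ v y e :=
    (hv.continuous_fderiv one_ne_zero).clm_apply continuous_const
  have hg' : Continuous fun y => fderiv ℝ g y e :=
    (hg.continuous_fderiv one_ne_zero).clm_apply continuous_const
  have hgs' : HasCompactSupport fun y => fderiv ℝ g y e :=
    (hgs.fderiv (𝕜 := ℝ)).comp_left (g := fun L : E →L[ℝ] ℝ => L e) rfl
  rw [integral_mul_fderiv_eq_neg_fderiv_mul_of_integrable (μ := volume) (f := v) (g := g) (v := e)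
    ((hv'.mul hg.continuous).integrable_of_hasCompactSupport hgs.mul_left)
    ((hv.continuous.mul hg').integrable_of_hasCompactSupport hgs'.mul_left)
    ((hv.continuous.mul hg.continuous).integrable_of_hasCompactSupport hgs.mul_left)
    (fun y _ => hv.differentiable one_ne_zero y) (fun y _ => hg.differentiable one_ne_zero y),
    neg_neg]

lemma bumpIntegral_divergence {ι : Type*} [Fintype ι] (b : OrthonormalBasis ι ℝ E) {m : ℕ}
    (hm : m ≠ 0) {F : ι → E → ℝ} (hF : ∀ i, ContDiff ℝ 1 (F i)) :
    bumpIntegral (m + 1) (fun y => ∑ i, fderiv ℝ (F i) y (b i)) =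
      2 * (m + 1) * bumpIntegral m fun y => ∑ i, F i y * inner ℝ (b i) y := by
  have hF' (i) : Continuous fun y => fderiv ℝ (F i) y (b i) :=
    ((hF i).continuous_fderiv one_ne_zero).clm_apply continuous_const
  have hFb (i) : Continuous fun y => F i y * inner ℝ (b i) y := by
    have := (hF i).continuous
    fun_prop
  simp only [bumpIntegral, Finset.sum_mul]
  rw [integral_finsetSum _ fun i _ => integrable_mul_bump m.succ_ne_zero (hF' i),
    integral_finsetSum _ fun i _ => integrable_mul_bump hm (hFb i), Finset.mul_sum]
  refine Finset.sum_congr rfl fun i _ => ?_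
  rw [integral_fderiv_apply_mul (hF i) (contDiff_one_bump hm)
    (hasCompactSupport_bump m.succ_ne_zero), ← integral_const_mul, ← integral_neg]
  simp only [fderiv_bump hm]
  congr with y
  rw [real_inner_comm]
  ring

lemma bumpIntegral_fderiv_self {m : ℕ} (hm : m ≠ 0) {v : E → ℝ} (hv : ContDiff ℝ 1 v) :
    bumpIntegral (m + 1) (fun y => fderiv ℝ v y y) = 2 * (m + 1) * bumpIntegral m v -
      (Module.finrank ℝ E + 2 * (m + 1)) * bumpIntegral (m + 1) v := by
  set b := stdOrthonormalBasis ℝ E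
  have h := bumpIntegral_divergence b hm (F := fun i y => v y * inner ℝ (b i) y)
    fun i => hv.mul (innerSL ℝ (b i)).contDiff
  have hsq (y : E) : ∑ i, v y * inner ℝ (b i) y * inner ℝ (b i) y = ‖y‖ ^ 2 * v y := by
    simp only [mul_assoc, ← Finset.mul_sum, ← sq, b.sum_sq_inner_right]
    exact mul_comm _ _
  simp only [sum_fderiv_mul_inner b (hv.differentiable one_ne_zero _), Fintype.card_fin, hsq] at h
  rw [bumpIntegral_norm_sq_mul hm hv.continuous, bumpIntegral_add m.succ_ne_zero
    (continuous_fderiv_self hv) (hv.continuous.const_mul _), bumpIntegral_const_mul] at h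
  linear_combination h

end Bump

section Bilaplacian

variable {n : ℕ} {u v : EuclideanSpace ℝ (Fin n) → ℝ}

lemma contDiff_lap {j m : WithTop ℕ∞} (hv : ContDiff ℝ j v) (h : m + 1 + 1 ≤ j) :
    ContDiff ℝ m (lap v) :=
  ContDiff.sum fun _ _ =>
    (((hv.fderiv_right h).clm_apply contDiff_const).fderiv_right le_rfl).clm_apply contDiff_const

lemma contDiff_two_lap (hv : ContDiff ℝ 4 v) : ContDiff ℝ 2 (lap v) :=
  contDiff_lap hv (by norm_num)

lemma continuous_bilap (hv : ContDiff ℝ 4 v) : Continuous (bilap v) :=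
  (contDiff_lap (m := 0) (contDiff_two_lap hv) (by norm_num)).continuous

lemma fderiv_mul_comp_add_smul {E : Type*} [NormedAddCommGroup E] [NormedSpace ℝ E] (v : E → ℝ)
    (a r : ℝ) (x y e : E) :
    fderiv ℝ (fun y => a * v (x + r • y)) y e = a * r * fderiv ℝ v (x + r • y) e := by
  have h := fderiv_comp_smul (𝕜 := ℝ) (f := fun z => v (x + z)) (x := y) r
  rw [fderiv_comp_add_left] at h
  rw [show (fun y => a * v (x + r • y)) = a • fun y => v (x + r • y) from rfl,
    fderiv_const_smul_field, Pi.smul_apply, h]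
  simp [mul_assoc]

lemma lap_comp_add_smul (a r : ℝ) (x y : EuclideanSpace ℝ (Fin n)) :
    lap (fun y => a * u (x + r • y)) y = a * r ^ 2 * lap u (x + r • y) := by
  simp only [lap, Finset.mul_sum, fderiv_mul_comp_add_smul]
  refine Finset.sum_congr rfl fun i _ => ?_
  rw [fderiv_mul_comp_add_smul fun z => fderiv ℝ u z (EuclideanSpace.single i 1)]
  ring

lemma bilap_comp_add_smul (a r : ℝ) (x y : EuclideanSpace ℝ (Fin n)) :
    bilap (fun y => a * u (x + r • y)) y = a * r ^ 4 * bilap u (x + r • y) := by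
  rw [bilap, funext (lap_comp_add_smul a r x), lap_comp_add_smul, bilap]
  ring

lemma bilap_const (c : ℝ) : bilap (fun _ : EuclideanSpace ℝ (Fin n) => c) = 0 :=
  funext fun y => by simpa using bilap_comp_add_smul (u := fun _ => c) 1 0 0 y

lemma bumpIntegral_lap {m : ℕ} (hm : m ≠ 0) (hv : ContDiff ℝ 2 v) :
    bumpIntegral (m + 1) (lap v) = 2 * (m + 1) * bumpIntegral m fun y => fderiv ℝ v y y := by
  have h := bumpIntegral_divergence (EuclideanSpace.basisFun (Fin n) ℝ) hm
    (F := fun i y => fderiv ℝ v y (EuclideanSpace.basisFun (Fin n) ℝ i))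
    fun i => (hv.fderiv_right (by norm_num)).clm_apply contDiff_const
  simp only [sum_apply_mul_inner] at h
  simp only [EuclideanSpace.basisFun_apply] at h
  exact h

/-- The functional turning radial derivatives into integrals of the bi-Laplacian:
`∫ Δ²v · bump (m + 3) = bilapPrimitive m (y ↦ Dv(y) y)`. Hence `r ↦ bilapPrimitive m (u (x + r ·))`
is a primitive of `r³ ∫ Δ²u (x + r ·) · bump (m + 3)`. -/
noncomputable def bilapPrimitive {E : Type*} [NormedAddCommGroup E] [InnerProductSpace ℝ E]
    [FiniteDimensional ℝ E] [MeasurableSpace E] [BorelSpace E] (m : ℕ) (v : E → ℝ) : ℝ :=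
  4 * (m + 2) * (m + 3) * (2 * (m + 1) * bumpIntegral m v -
    (Module.finrank ℝ E + 2 * (m + 2)) * bumpIntegral (m + 1) v)

lemma bumpIntegral_bilap {m : ℕ} (hm : m ≠ 0) (hv : ContDiff ℝ 4 v) :
    bumpIntegral (m + 3) (bilap v) = bilapPrimitive m fun y => fderiv ℝ v y y := by
  have h2 : ContDiff ℝ 2 v := hv.of_le (by norm_num)
  have hl := contDiff_two_lap hv
  rw [bilap, bumpIntegral_lap (by omega) hl,
    bumpIntegral_fderiv_self (by omega) (hl.of_le one_le_two), bumpIntegral_lap hm h2,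
    bumpIntegral_lap m.succ_ne_zero h2, bilapPrimitive]
  push_cast
  ring

lemma exists_bumpIntegral_bilap_le (n : ℕ) {m : ℕ} (hm : m ≠ 0) :
    ∃ A, 0 ≤ A ∧ ∀ u : EuclideanSpace ℝ (Fin n) → ℝ, ContDiff ℝ 4 u → (∀ x, 0 ≤ u x) →
      bumpIntegral (m + 4) (bilap u) ≤ A * bumpIntegral m u := by
  refine ⟨4 * (m + 3) * (m + 4) * (2 * (m + 2) * (2 * (m + 1)) +
    (n + 2 * (m + 3)) * (n + 2 * (m + 2))), by positivity, fun u hu hpos => ?_⟩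
  have hu1 : ContDiff ℝ 1 u := hu.of_le (by norm_num)
  have hexpand : bumpIntegral (m + 4) (bilap u) = 4 * (m + 3) * (m + 4) * (2 * (m + 2) *
      (2 * (m + 1) * bumpIntegral m u - (n + 2 * (m + 1)) * bumpIntegral (m + 1) u) -
      (n + 2 * (m + 3)) * (2 * (m + 2) * bumpIntegral (m + 1) u -
        (n + 2 * (m + 2)) * bumpIntegral (m + 2) u)) := by
    rw [bumpIntegral_bilap m.succ_ne_zero hu, bilapPrimitive, bumpIntegral_fderiv_self hm hu1,
      bumpIntegral_fderiv_self m.succ_ne_zero hu1, finrank_euclideanSpace_fin]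
    push_cast
    ring
  have hnonneg : 0 ≤ bumpIntegral (m + 1) u := bumpIntegral_nonneg _ hpos
  have hanti := bumpIntegral_antitone hm (show m ≤ m + 2 by omega) hu.continuous hpos
  rw [hexpand, mul_assoc (4 * ((m : ℝ) + 3) * (m + 4))]
  refine mul_le_mul_of_nonneg_left ?_ (by positivity)
  have hdrop : 0 ≤ (2 * (m + 2) * (n + 2 * (m + 1)) + (n + 2 * (m + 3)) * (2 * (m + 2))) *
    bumpIntegral (m + 1) u := by positivity
  have hbound : (n + 2 * (m + 3)) * (n + 2 * (m + 2)) * bumpIntegral (m + 2) u ≤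
    (n + 2 * (m + 3)) * (n + 2 * (m + 2)) * bumpIntegral m u := by gcongr
  linarith

end Bilaplacian

section Supersolution

/-- Nonnegative classical solutions of the scalar inequality `uˢ ≤ Δ²u` on the whole space, which
every component of a solution of the system satisfies. -/
structure BilapSupersolution {n : ℕ} (s : ℝ) (u : EuclideanSpace ℝ (Fin n) → ℝ) : Prop where
  contDiff : ContDiff ℝ 4 u
  nonneg : ∀ x, 0 ≤ u x
  rpow_le_bilap : ∀ x, u x ^ s ≤ bilap u x

variable {n : ℕ} {s : ℝ} {u : EuclideanSpace ℝ (Fin n) → ℝ}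

lemma BilapSupersolution.bilap_nonneg (hu : BilapSupersolution s u)
    (x : EuclideanSpace ℝ (Fin n)) : 0 ≤ bilap u x :=
  (Real.rpow_nonneg (hu.nonneg x) s).trans (hu.rpow_le_bilap x)

lemma BilapSupersolution.rescale (hs : 1 < s) (hu : BilapSupersolution s u)
    (x : EuclideanSpace ℝ (Fin n)) {r : ℝ} (hr : 0 < r) :
    BilapSupersolution s fun y => r ^ (4 / (s - 1)) * u (x + r • y) where
  contDiff := by
    have := hu.contDiff
    fun_prop
  nonneg y := mul_nonneg (by positivity) (hu.nonneg _)
  rpow_le_bilap y := by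
    have h : r ^ (4 / (s - 1) * s) = r ^ (4 / (s - 1)) * r ^ 4 := by
      have : s - 1 ≠ 0 := by linarith
      rw [← Real.rpow_natCast r 4, ← Real.rpow_add hr]
      congr 1
      field_simp
      push_cast
      ring
    rw [bilap_comp_add_smul, Real.mul_rpow (by positivity) (hu.nonneg _), ← Real.rpow_mul hr.le, h]
    gcongr
    exact hu.rpow_le_bilap _

/-- A form of Young's inequality: depending on whether `2 C ≤ t^(s-1) w⁴` or not, the first or the
second term on the right dominates. -/
lemma exists_mul_pow_le_rpow_add (hs : 1 < s) {C : ℝ} (hC : 0 < C) {m : ℕ}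
    (hm : 4 / (s - 1) ≤ m) : ∃ C', ∀ t w : ℝ, 0 ≤ t → 0 ≤ w → w ≤ 1 →
      C * (t * w ^ (m + 1)) ≤ 1 / 2 * (t ^ s * w ^ (m + 5)) + C' * w := by
  have hs0 : 0 < s - 1 := by linarith
  rw [div_le_iff₀ hs0] at hm
  refine ⟨C * (2 * C) ^ (s - 1)⁻¹, fun t w ht hw hw1 => ?_⟩
  rcases le_or_gt (2 * C) (t ^ (s - 1) * w ^ 4) with h | h
  · have hlarge : 2 * C * (t * w ^ (m + 1)) ≤ t ^ (s - 1) * w ^ 4 * (t * w ^ (m + 1)) := by gcongr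
    have hts : t ^ s = t ^ (s - 1) * t := by
      rw [← Real.rpow_add_one' ht (by linarith), sub_add_cancel]
    have hrest : 0 ≤ C * (2 * C) ^ (s - 1)⁻¹ * w := by positivity
    rw [hts]
    linear_combination hlarge / 2 + hrest
  · have hsmall : t * w ^ m ≤ (2 * C) ^ (s - 1)⁻¹ := by
      rw [Real.le_rpow_inv_iff_of_pos (by positivity) (by positivity) hs0,
        Real.mul_rpow ht (by positivity)]
      refine le_trans ?_ h.le
      gcongr
      rcases hw.eq_or_lt with rfl | hw0
      · have : m ≠ 0 := by
          rintro rfl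
          norm_num at hm
        simp [this, Real.zero_rpow hs0.ne']
      · rw [← Real.rpow_natCast w m, ← Real.rpow_mul hw, ← Real.rpow_natCast w 4]
        exact Real.rpow_le_rpow_of_exponent_ge hw0 hw1 (by exact_mod_cast hm)
    have hscaled : C * w * (t * w ^ m) ≤ C * w * (2 * C) ^ (s - 1)⁻¹ := by gcongr
    have hrest : 0 ≤ t ^ s * w ^ (m + 5) := by positivity
    linear_combination hscaled + hrest / 2

lemma exists_forall_bumpIntegral_le (n : ℕ) (hs : 1 < s) {m : ℕ} (hm : 4 / (s - 1) ≤ m) :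
    ∃ C, ∀ u : EuclideanSpace ℝ (Fin n) → ℝ, BilapSupersolution s u →
      bumpIntegral (m + 1) u ≤ C := by
  obtain ⟨A, hA, hAu⟩ := exists_bumpIntegral_bilap_le n m.succ_ne_zero
  obtain ⟨C, hCw⟩ := exists_mul_pow_le_rpow_add hs (by linarith : 0 < A + 1) hm
  refine ⟨C * bumpIntegral 1 fun _ : EuclideanSpace ℝ (Fin n) => 1, fun u hu => ?_⟩
  have hcont : Continuous fun y => u y ^ s :=
    hu.contDiff.continuous.rpow_const fun _ => .inr (by linarith)
  have hyoung : (A + 1) * bumpIntegral (m + 1) u ≤ 1 / 2 * bumpIntegral (m + 5) (fun y => u y ^ s) +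
      C * bumpIntegral 1 fun _ : EuclideanSpace ℝ (Fin n) => 1 := by
    have hint := integrable_mul_bump (by omega : m + 5 ≠ 0) hcont
    have hint' := integrable_mul_bump one_ne_zero
      (continuous_const (X := EuclideanSpace ℝ (Fin n)) (y := (1 : ℝ)))
    simp only [bumpIntegral, ← integral_const_mul]
    rw [← integral_add (hint.const_mul _) (hint'.const_mul _)]
    refine integral_mono ((integrable_mul_bump m.succ_ne_zero hu.contDiff.continuous).const_mul _)
      ((hint.const_mul _).add (hint'.const_mul _)) fun y => ?_
    simpa [bump] using hCw (u y) (bump 1 y) (hu.nonneg y) (bump_nonneg 1 y) (bump_le_one 1 y)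
  have htest : bumpIntegral (m + 5) (fun y => u y ^ s) ≤ A * bumpIntegral (m + 1) u :=
    (bumpIntegral_mono (by omega) hcont (continuous_bilap hu.contDiff) hu.rpow_le_bilap).trans
      (hAu u hu.contDiff hu.nonneg)
  have hnonneg : 0 ≤ A * bumpIntegral (m + 1) u := mul_nonneg hA (bumpIntegral_nonneg _ hu.nonneg)
  linarith

lemma BilapSupersolution.tendsto_bumpIntegral (hs : 1 < s) {m : ℕ} (hm : 4 / (s - 1) ≤ m)
    (hu : BilapSupersolution s u) (x : EuclideanSpace ℝ (Fin n)) :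
    Tendsto (fun r : ℝ => bumpIntegral (m + 1) fun y => u (x + r • y)) atTop (𝓝 0) := by
  obtain ⟨C, hC⟩ := exists_forall_bumpIntegral_le n hs hm
  have hlim : Tendsto (fun r : ℝ => C * r ^ (-(4 / (s - 1)))) atTop (𝓝 0) := by
    simpa using (tendsto_rpow_neg_atTop (div_pos four_pos (sub_pos.2 hs))).const_mul C
  refine squeeze_zero' (.of_forall fun r => bumpIntegral_nonneg _ fun y => hu.nonneg _) ?_ hlim
  filter_upwards [eventually_gt_atTop 0] with r hr
  have h := hC _ (hu.rescale hs x hr)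
  rw [bumpIntegral_const_mul] at h
  rw [Real.rpow_neg hr.le, ← div_eq_mul_inv, le_div_iff₀ (by positivity)]
  linarith

end Supersolution

section RieszPotential

variable {E : Type*} [NormedAddCommGroup E] [InnerProductSpace ℝ E]

/-- The radial weight whose dilates average `bump m (w / r)` over all scales `r` to a multiple of
the Riesz kernel `‖w‖⁻ᵏ`. -/
noncomputable def scaleWeight (k m : ℕ) (r : ℝ) : ℝ := (r ^ (k + 1))⁻¹ * bump m r⁻¹

lemma scaleWeight_nonneg (k m : ℕ) {r : ℝ} (hr : 0 < r) : 0 ≤ scaleWeight k m r :=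
  mul_nonneg (by positivity) (bump_nonneg m _)

lemma integrableOn_scaleWeight {k m : ℕ} (hk : k ≠ 0) (hm : m ≠ 0) :
    IntegrableOn (scaleWeight k m) (Set.Ioi 0) := by
  have hIoc : IntegrableOn (scaleWeight k m) (Set.Ioc 0 1) := by
    refine integrableOn_zero.congr_fun (fun r hr => ?_) measurableSet_Ioc
    have hr1 : 1 ≤ ‖r⁻¹‖ := by
      rw [Real.norm_of_nonneg (inv_nonneg.2 hr.1.le)]
      exact (one_le_inv₀ hr.1).2 hr.2
    simp [scaleWeight, bump_eq_zero hm hr1]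
  have hIoi : IntegrableOn (scaleWeight k m) (Set.Ioi 1) := by
    have hk' : -((k + 1 : ℕ) : ℝ) < -1 := by
      have : (0 : ℝ) < k := by positivity
      push_cast
      linarith
    refine (integrableOn_Ioi_rpow_of_lt hk' one_pos).mono' ?_ ?_
    · have := (continuous_bump (E := ℝ) m).measurable
      exact Measurable.aestronglyMeasurable (by unfold scaleWeight; fun_prop)
    · filter_upwards [self_mem_ae_restrict measurableSet_Ioi] with r hr
      have hr0 : 0 < r := one_pos.trans hr
      rw [Real.norm_of_nonneg (scaleWeight_nonneg k m hr0), Real.rpow_neg hr0.le,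
        Real.rpow_natCast]
      exact mul_le_of_le_one_right (by positivity) (bump_le_one m _)
  simpa [Set.Ioc_union_Ioi_eq_Ioi zero_le_one] using hIoc.union hIoi

lemma integral_scaleWeight_pos {k m : ℕ} (hk : k ≠ 0) (hm : m ≠ 0) :
    0 < ∫ r in Set.Ioi (0 : ℝ), scaleWeight k m r := by
  rw [setIntegral_pos_iff_support_of_nonneg_ae _ (integrableOn_scaleWeight hk hm)]
  · have h : Set.Ioi (1 : ℝ) ⊆ Function.support (scaleWeight k m) ∩ Set.Ioi 0 := by
      intro r (hr : 1 < r)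
      have hr0 : 0 < r := one_pos.trans hr
      have hr1 : r⁻¹ < 1 := inv_lt_one_of_one_lt₀ hr
      have hpos : 0 < 1 - r⁻¹ ^ 2 := by nlinarith [inv_pos.2 hr0]
      refine ⟨ne_of_gt ?_, hr0⟩
      rw [scaleWeight, bump, Real.norm_eq_abs, sq_abs, max_eq_left hpos.le]
      positivity
    exact lt_of_lt_of_le (by simp) (measure_mono h)
  · filter_upwards [self_mem_ae_restrict measurableSet_Ioi] with r hr
    exact scaleWeight_nonneg k m hr

lemma lintegral_bump_inv_smul {k m : ℕ} (hk : k ≠ 0) (hm : m ≠ 0) {w : E} (hw : w ≠ 0) :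
    ∫⁻ r in Set.Ioi (0 : ℝ), ENNReal.ofReal ((r ^ (k + 1))⁻¹ * bump m (r⁻¹ • w)) =
      ENNReal.ofReal ((∫ r in Set.Ioi (0 : ℝ), scaleWeight k m r) / ‖w‖ ^ k) := by
  have hw0 : 0 < ‖w‖ := norm_pos_iff.2 hw
  have hscale (r : ℝ) : (r ^ (k + 1))⁻¹ * bump m (r⁻¹ • w) =
      (‖w‖ ^ (k + 1))⁻¹ * scaleWeight k m (‖w‖⁻¹ * r) := by
    have hnorm : ‖r⁻¹ • w‖ = ‖(‖w‖⁻¹ * r)⁻¹‖ := by simp [norm_smul, mul_comm]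
    rw [scaleWeight, bump, bump, hnorm, mul_pow, inv_pow]
    field_simp
  have hint : IntegrableOn (fun r => scaleWeight k m (‖w‖⁻¹ * r)) (Set.Ioi 0) := by
    have h := (integrableOn_Ioi_comp_mul_left_iff (scaleWeight k m) 0 (inv_pos.2 hw0)).2
    rw [mul_zero] at h
    exact h (integrableOn_scaleWeight hk hm)
  simp only [hscale]
  rw [← ofReal_integral_eq_lintegral_ofReal (hint.const_mul _)]
  · rw [integral_const_mul, integral_comp_mul_left_Ioi _ _ (inv_pos.2 hw0), mul_zero, smul_eq_mul,
      inv_inv]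
    congr 1
    field_simp
    ring
  · filter_upwards [self_mem_ae_restrict measurableSet_Ioi] with r hr
    have hr0 : 0 < r := hr
    exact mul_nonneg (by positivity) (scaleWeight_nonneg k m (by positivity))

variable [FiniteDimensional ℝ E] [MeasurableSpace E] [BorelSpace E]

lemma hasDerivAt_bumpIntegral {m : ℕ} (hm : m ≠ 0) {u : E → ℝ} (hu : ContDiff ℝ 1 u) (x : E)
    (r : ℝ) : HasDerivAt (fun r : ℝ => bumpIntegral m fun y => u (x + r • y))
      (bumpIntegral m fun y => fderiv ℝ u (x + r • y) y) r := by
  have hcont := hu.continuous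
  have hbump := continuous_bump (E := E) m
  have hderiv : Continuous fun q : ℝ × E => fderiv ℝ u (x + q.1 • q.2) q.2 := by
    have := hu.continuous_fderiv one_ne_zero
    fun_prop
  obtain ⟨M, hM⟩ := ((isCompact_closedBall r 1).prod
    (isCompact_closedBall (0 : E) 1)).exists_bound_of_continuousOn hderiv.continuousOn
  refine (hasDerivAt_integral_of_dominated_loc_of_deriv_le
    (bound := fun y => M * bump m y) (F' := fun r y => fderiv ℝ u (x + r • y) y * bump m y)
    (closedBall_mem_nhds r one_pos) (.of_forall fun t => ?_)
    (integrable_mul_bump hm (by fun_prop)) ?_ (.of_forall fun y t ht => ?_)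
    (integrable_mul_bump hm continuous_const) (.of_forall fun y t _ => ?_)).2
  · exact Continuous.aestronglyMeasurable (by fun_prop)
  · exact ((hderiv.comp (Continuous.prodMk_right r)).mul hbump).aestronglyMeasurable
  · rcases le_or_gt ‖y‖ 1 with hy | hy
    · rw [norm_mul, Real.norm_of_nonneg (bump_nonneg m y)]
      exact mul_le_mul_of_nonneg_right (hM (t, y) ⟨ht, by simpa using hy⟩) (bump_nonneg m y)
    · simp [bump_eq_zero hm hy.le]
  · have h : HasDerivAt (fun t : ℝ => x + t • y) y t := by
      simpa using ((hasDerivAt_id t).smul_const y).const_add x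
    exact ((hu.differentiable one_ne_zero _).hasFDerivAt.comp_hasDerivAt t h).mul_const _

/-- The Riesz potential `x ↦ ∫ f(z) / ‖x - z‖ᵏ dz`, without normalising constant. -/
noncomputable def rieszPotential (k : ℕ) (f : E → ℝ) (x : E) : ℝ := ∫ z, f z / ‖x - z‖ ^ k

lemma bumpIntegral_comp_add_smul (m : ℕ) (f : E → ℝ) (x : E) {r : ℝ} (hr : 0 < r) :
    bumpIntegral m (fun y => f (x + r • y)) =
      (r ^ Module.finrank ℝ E)⁻¹ * ∫ z, f z * bump m (r⁻¹ • (z - x)) := by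
  have h := Measure.integral_comp_smul (volume : Measure E)
    (fun z => f (x + z) * bump m (r⁻¹ • z)) r
  simp only [smul_smul, inv_mul_cancel₀ hr.ne', one_smul, smul_eq_mul,
    abs_of_pos (inv_pos.2 (pow_pos hr _))] at h
  rw [bumpIntegral, h, ← integral_add_left_eq_self (fun z => f z * bump m (r⁻¹ • (z - x))) x]
  simp only [add_sub_cancel_left]

lemma ofReal_pow_mul_bumpIntegral {k q m : ℕ} (hE : Module.finrank ℝ E = k + q + 1) (hm : m ≠ 0)
    {f : E → ℝ} (hf : Continuous f) (h0 : ∀ z, 0 ≤ f z) (x : E) {r : ℝ} (hr : 0 < r) :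
    ENNReal.ofReal (r ^ q * bumpIntegral m fun y => f (x + r • y)) =
      ∫⁻ z, ENNReal.ofReal (f z) *
        ENNReal.ofReal ((r ^ (k + 1))⁻¹ * bump m (r⁻¹ • (z - x))) := by
  have hpow : r ^ q * (r ^ (k + q + 1))⁻¹ = (r ^ (k + 1))⁻¹ := by
    field_simp
    ring
  rw [bumpIntegral_comp_add_smul m f x hr, hE, ← mul_assoc, hpow, ← integral_const_mul,
    ofReal_integral_eq_lintegral_ofReal]
  · simp only [← ENNReal.ofReal_mul (h0 _), mul_left_comm]
  · have hbump := continuous_bump (E := E) m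
    refine (Continuous.integrable_of_hasCompactSupport (by fun_prop) ?_).const_mul _
    refine HasCompactSupport.intro (isCompact_closedBall x r) fun z hz => ?_
    rw [bump_eq_zero hm, mul_zero]
    rw [norm_smul, Real.norm_of_nonneg (inv_nonneg.2 hr.le), ← div_eq_inv_mul, one_le_div₀ hr]
    exact (not_le.1 (mt mem_closedBall_iff_norm.2 hz)).le
  · exact .of_forall fun z => mul_nonneg (by positivity) (mul_nonneg (h0 z) (bump_nonneg m _))

lemma lintegral_pow_mul_bumpIntegral {k q m : ℕ} (hE : Module.finrank ℝ E = k + q + 1)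
    (hk : k ≠ 0) (hm : m ≠ 0) {f : E → ℝ} (hf : Continuous f) (h0 : ∀ z, 0 ≤ f z) (x : E) :
    ∫⁻ r in Set.Ioi (0 : ℝ), ENNReal.ofReal (r ^ q * bumpIntegral m fun y => f (x + r • y)) =
      ∫⁻ z, ENNReal.ofReal
        ((∫ r in Set.Ioi (0 : ℝ), scaleWeight k m r) * (f z / ‖x - z‖ ^ k)) := by
  have : Nontrivial E := Module.nontrivial_of_finrank_pos (R := ℝ) (by omega)
  have hmeas : Measurable (bump (E := E) m) := (continuous_bump m).measurable
  rw [setLIntegral_congr_fun measurableSet_Ioi fun r hr =>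
    ofReal_pow_mul_bumpIntegral hE hm hf h0 x hr, lintegral_lintegral_swap]
  · refine lintegral_congr_ae ?_
    filter_upwards [Measure.ae_ne volume x] with z hz
    rw [lintegral_const_mul' _ _ ENNReal.ofReal_ne_top,
      lintegral_bump_inv_smul hk hm (sub_ne_zero.2 hz), ← ENNReal.ofReal_mul (h0 z),
      norm_sub_rev x z]
    congr 1
    ring
  · have := hf.measurable
    exact Measurable.aemeasurable (by unfold Function.uncurry; fun_prop)

lemma rieszPotential_eq_integral_bumpIntegral {k q m : ℕ} (hE : Module.finrank ℝ E = k + q + 1)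
    (hk : k ≠ 0) (hm : m ≠ 0) {f : E → ℝ} (hf : Continuous f) (h0 : ∀ z, 0 ≤ f z) {x : E}
    (hi : IntegrableOn (fun r : ℝ => r ^ q * bumpIntegral m fun y => f (x + r • y)) (Set.Ioi 0)) :
    Integrable (fun z => f z / ‖x - z‖ ^ k) ∧ (∫ r in Set.Ioi (0 : ℝ), scaleWeight k m r) *
      rieszPotential k f x =
        ∫ r in Set.Ioi (0 : ℝ), r ^ q * bumpIntegral m fun y => f (x + r • y) := by
  set κ := ∫ r in Set.Ioi (0 : ℝ), scaleWeight k m r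
  have hκ : 0 < κ := integral_scaleWeight_pos hk hm
  have hpos : ∀ᵐ r ∂volume.restrict (Set.Ioi (0 : ℝ)),
      0 ≤ r ^ q * bumpIntegral m fun y => f (x + r • y) := by
    filter_upwards [self_mem_ae_restrict measurableSet_Ioi] with r hr
    exact mul_nonneg (pow_nonneg (Set.mem_Ioi.1 hr).le q) (bumpIntegral_nonneg m fun y => h0 _)
  have hpos' : ∀ᵐ z, 0 ≤ κ * (f z / ‖x - z‖ ^ k) :=
    .of_forall fun z => mul_nonneg hκ.le (div_nonneg (h0 z) (by positivity))
  have hmeas : AEStronglyMeasurable fun z => κ * (f z / ‖x - z‖ ^ k) := by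
    have := hf.measurable
    exact Measurable.aestronglyMeasurable (by fun_prop)
  have h := lintegral_pow_mul_bumpIntegral hE hk hm hf h0 x
  have hint : Integrable fun z => κ * (f z / ‖x - z‖ ^ k) := by
    refine ⟨hmeas, (hasFiniteIntegral_iff_ofReal hpos').2 ?_⟩
    rw [← h]
    exact (hasFiniteIntegral_iff_ofReal hpos).1 hi.2
  refine ⟨by simpa [hκ.ne'] using hint.const_mul κ⁻¹, ?_⟩
  rw [rieszPotential, ← integral_const_mul, integral_eq_lintegral_of_nonneg_ae hpos' hmeas,
    integral_eq_lintegral_of_nonneg_ae hpos hi.1, h]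

lemma BilapSupersolution.hasDerivAt_bilapPrimitive {n : ℕ} {s : ℝ}
    {u : EuclideanSpace ℝ (Fin n) → ℝ} (hu : BilapSupersolution s u) {m : ℕ} (hm : m ≠ 0)
    (x : EuclideanSpace ℝ (Fin n)) {r : ℝ} (hr : 0 < r) :
    HasDerivAt (fun r : ℝ => bilapPrimitive m fun y => u (x + r • y))
      (r ^ 3 * bumpIntegral (m + 3) fun y => bilap u (x + r • y)) r := by
  have hu1 : ContDiff ℝ 1 u := hu.contDiff.of_le (by norm_num)
  have h := bumpIntegral_bilap (v := fun y => 1 * u (x + r • y)) hm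
    (by have := hu.contDiff; fun_prop)
  simp only [funext (bilap_comp_add_smul 1 r x), fderiv_mul_comp_add_smul, bilapPrimitive,
    bumpIntegral_const_mul] at h
  have hd := (((hasDerivAt_bumpIntegral hm hu1 x r).const_mul (2 * (m + 1 : ℝ))).sub
    ((hasDerivAt_bumpIntegral m.succ_ne_zero hu1 x r).const_mul
      (Module.finrank ℝ (EuclideanSpace ℝ (Fin n)) + 2 * (m + 2 : ℝ)))).const_mul
    (4 * (m + 2) * (m + 3 : ℝ))
  refine hd.congr_deriv (mul_left_cancel₀ hr.ne' ?_)
  linear_combination -h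

lemma BilapSupersolution.integral_bumpIntegral_bilap {n : ℕ} {s : ℝ}
    {u : EuclideanSpace ℝ (Fin n) → ℝ} (hs : 1 < s) (hu : BilapSupersolution s u) {m : ℕ}
    (hm : 4 / (s - 1) ≤ m) (x : EuclideanSpace ℝ (Fin n)) :
    IntegrableOn (fun r : ℝ => r ^ 3 * bumpIntegral (m + 4) fun y => bilap u (x + r • y))
        (Set.Ioi 0) ∧
      ∫ r in Set.Ioi (0 : ℝ), r ^ 3 * bumpIntegral (m + 4) (fun y => bilap u (x + r • y)) =
        -bilapPrimitive (m + 1) (fun _ : EuclideanSpace ℝ (Fin n) => (1 : ℝ)) * u x := by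
  have hu1 : ContDiff ℝ 1 u := hu.contDiff.of_le (by norm_num)
  have hderiv : ∀ r ∈ Set.Ioi (0 : ℝ), HasDerivAt _ _ r := fun r hr =>
    hu.hasDerivAt_bilapPrimitive m.succ_ne_zero x hr
  have hpos : ∀ r ∈ Set.Ioi (0 : ℝ),
      0 ≤ r ^ 3 * bumpIntegral (m + 4) fun y => bilap u (x + r • y) := fun r hr =>
    mul_nonneg (pow_nonneg (Set.mem_Ioi.1 hr).le 3)
      (bumpIntegral_nonneg _ fun y => hu.bilap_nonneg _)
  have hcont : ContinuousWithinAt (fun r : ℝ => bilapPrimitive (m + 1) fun y => u (x + r • y))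
      (Set.Ici 0) 0 :=
    ((((hasDerivAt_bumpIntegral m.succ_ne_zero hu1 x 0).continuousAt.const_mul _).sub
      ((hasDerivAt_bumpIntegral (m + 1).succ_ne_zero hu1 x 0).continuousAt.const_mul _)).const_mul
      _).continuousWithinAt
  have hlim : Tendsto (fun r : ℝ => bilapPrimitive (m + 1) fun y => u (x + r • y)) atTop (𝓝 0) := by
    have h0 := hu.tendsto_bumpIntegral hs hm x
    have h1 := hu.tendsto_bumpIntegral (m := m + 1) hs (by push_cast; linarith) x
    simpa [bilapPrimitive] using ((h0.const_mul _).sub (h1.const_mul _)).const_mul _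
  refine ⟨integrableOn_Ioi_deriv_of_nonneg hcont hderiv hpos hlim, ?_⟩
  rw [integral_Ioi_of_hasDerivAt_of_nonneg hcont hderiv hpos hlim]
  have h (i : ℕ) : bumpIntegral i (fun _ : EuclideanSpace ℝ (Fin n) => u x) =
      u x * bumpIntegral i fun _ : EuclideanSpace ℝ (Fin n) => (1 : ℝ) := by
    simpa using bumpIntegral_const_mul i (u x) fun _ : EuclideanSpace ℝ (Fin n) => (1 : ℝ)
  simp only [zero_smul, add_zero, bilapPrimitive, h]
  ring

lemma exists_rieszPotential_bilap_eq {k : ℕ} (hk : k ≠ 0) {s : ℝ} (hs : 1 < s) :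
    ∃ c, ∀ u : EuclideanSpace ℝ (Fin (k + 4)) → ℝ, BilapSupersolution s u → ∀ x,
      Integrable (fun z => bilap u z / ‖x - z‖ ^ k) ∧
        rieszPotential k (bilap u) x = c * u x := by
  obtain ⟨m, hm⟩ := exists_nat_ge (4 / (s - 1))
  have hκ := integral_scaleWeight_pos hk (by omega : m + 4 ≠ 0)
  refine ⟨-bilapPrimitive (m + 1) (fun _ : EuclideanSpace ℝ (Fin (k + 4)) => (1 : ℝ)) /
    ∫ r in Set.Ioi (0 : ℝ), scaleWeight k (m + 4) r, fun u hu x => ?_⟩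
  obtain ⟨hi, he⟩ := hu.integral_bumpIntegral_bilap hs hm x
  obtain ⟨hint, heq⟩ := rieszPotential_eq_integral_bumpIntegral (q := 3) (by simp) hk
    (by omega : m + 4 ≠ 0) (continuous_bilap hu.contDiff) hu.bilap_nonneg hi
  refine ⟨hint, ?_⟩
  rw [div_mul_eq_mul_div, eq_div_iff hκ.ne', mul_comm, heq, he]

end RieszPotential

section Kelvin

open EuclideanGeometry

variable {E : Type*} [NormedAddCommGroup E] [InnerProductSpace ℝ E]

lemma inversion_zero_apply (l : ℝ) (x : E) : inversion 0 l x = (l / ‖x‖) ^ 2 • x := by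
  simp [inversion]

lemma norm_inversion_zero (l : ℝ) (x : E) : ‖inversion 0 l x‖ = l ^ 2 / ‖x‖ := by
  simpa using dist_inversion_center 0 x l

lemma image_inversion_exterior {l : ℝ} (hl : 0 < l) :
    inversion 0 l '' {z : E | l < ‖z‖} = ball 0 l \ {0} := by
  rw [(inversion_involutive (0 : E) hl.ne').image_eq_preimage_symm]
  ext w
  rcases eq_or_ne w 0 with rfl | hw
  · simp [hl.le]
  · have hw0 : 0 < ‖w‖ := norm_pos_iff.2 hw
    simp only [Set.mem_preimage, Set.mem_ofPred_eq, norm_inversion_zero, lt_div_iff₀ hw0, sq,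
      mul_lt_mul_iff_right₀ hl]
    simp [hw]

lemma abs_det_smul_reflection [FiniteDimensional ℝ E] (c : ℝ) (K : Submodule ℝ E) :
    |(c ^ 2 • (K.reflection : E →L[ℝ] E)).det| = c ^ (2 * Module.finrank ℝ E) := by
  have h : |LinearMap.det ((K.reflection : E →L[ℝ] E) : E →ₗ[ℝ] E)| = 1 := by
    rw [show ((K.reflection : E →L[ℝ] E) : E →ₗ[ℝ] E) = K.reflection.toLinearMap from rfl,
      K.det_reflection, abs_pow, abs_neg, abs_one, one_pow]
  rw [ContinuousLinearMap.det, ContinuousLinearMap.toLinearMap_smul, LinearMap.det_smul, abs_mul,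
    h, mul_one, pow_mul, abs_of_nonneg (by positivity)]

/-- The Kelvin transform of order `k` in the sphere of radius `l` about the origin. For `u` with
`Δ²u = f` on `ℝⁿ` the relevant orders are `n - 4` for `u` and `n + 4` for `f`. -/
noncomputable def kelvinTransform (k : ℕ) (l : ℝ) (u : E → ℝ) (y : E) : ℝ :=
  (l / ‖y‖) ^ k * u (inversion 0 l y)

/-- The quantity `‖y‖‖y* - z‖ / l`, where `y*` is the inverse of `y` in the sphere of radius `l`
about the origin. It is symmetric in `y` and `z`, and the Kelvin transform turns `‖y - z‖⁻ᵏ` into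
its power `-k`. -/
noncomputable def reflectedDist (l : ℝ) (y z : E) : ℝ := ‖y‖ * ‖inversion 0 l y - z‖ / l

lemma reflectedDist_sq_sub_sq {l : ℝ} (hl : l ≠ 0) {y : E} (hy : y ≠ 0) (z : E) :
    reflectedDist l y z ^ 2 - ‖y - z‖ ^ 2 =
      (‖y‖ ^ 2 - l ^ 2) * (‖z‖ ^ 2 - l ^ 2) / l ^ 2 := by
  have hy0 : ‖y‖ ≠ 0 := norm_ne_zero_iff.2 hy
  have h : ‖inversion 0 l y - z‖ ^ 2 =
      (l ^ 2 / ‖y‖) ^ 2 - 2 * ((l / ‖y‖) ^ 2 * inner ℝ y z) + ‖z‖ ^ 2 := by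
    rw [norm_sub_sq_real, norm_inversion_zero, inversion_zero_apply, inner_smul_left]
    simp
  rw [reflectedDist, div_pow, mul_pow, h, norm_sub_sq_real]
  field_simp
  ring

lemma norm_sub_le_reflectedDist {l : ℝ} (hl : 0 < l) {y z : E} (hy : l ≤ ‖y‖) (hz : l ≤ ‖z‖) :
    ‖y - z‖ ≤ reflectedDist l y z := by
  have h := reflectedDist_sq_sub_sq hl.ne' (norm_pos_iff.1 (hl.trans_le hy)) z
  have hy2 : 0 ≤ ‖y‖ ^ 2 - l ^ 2 := by nlinarith
  have hz2 : 0 ≤ ‖z‖ ^ 2 - l ^ 2 := by nlinarith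
  have hnonneg : 0 ≤ (‖y‖ ^ 2 - l ^ 2) * (‖z‖ ^ 2 - l ^ 2) / l ^ 2 := by positivity
  exact (abs_le_of_sq_le_sq' (by linarith) (by unfold reflectedDist; positivity)).2

/-- The kernel representing `u - kelvinTransform k l u` on the exterior of the sphere of radius `l`
when `u` is a Riesz potential of order `k`. -/
noncomputable def kelvinKernel (k : ℕ) (l : ℝ) (y z : E) : ℝ :=
  (‖y - z‖ ^ k)⁻¹ - (reflectedDist l y z ^ k)⁻¹

lemma kelvinKernel_nonneg (k : ℕ) {l : ℝ} (hl : 0 < l) {y z : E} (hy : l ≤ ‖y‖) (hz : l ≤ ‖z‖)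
    (hyz : y ≠ z) : 0 ≤ kelvinKernel k l y z := by
  have hpos : 0 < ‖y - z‖ := norm_pos_iff.2 (sub_ne_zero.2 hyz)
  have hle := norm_sub_le_reflectedDist hl hy hz
  rw [kelvinKernel, sub_nonneg]
  gcongr

lemma sq_sub_sq_div_le_inv_pow_sub_inv_pow {k : ℕ} (hk : k ≠ 0) {a b : ℝ} (ha : 0 < a)
    (hab : a ≤ b) : (b ^ 2 - a ^ 2) / (2 * b ^ (k + 2)) ≤ (a ^ k)⁻¹ - (b ^ k)⁻¹ := by
  obtain ⟨m, rfl⟩ := Nat.exists_eq_add_one_of_ne_zero hk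
  have hb : 0 < b := ha.trans_le hab
  have hinv : (a * b ^ m)⁻¹ ≤ (a ^ (m + 1))⁻¹ := by
    rw [pow_succ']
    gcongr
  have hdiff : (a * b ^ m)⁻¹ - (b ^ (m + 1))⁻¹ - (b ^ 2 - a ^ 2) / (2 * b ^ (m + 1 + 2)) =
      (b - a) * (2 * b ^ 2 - a * (b + a)) / (2 * a * b ^ (m + 3)) := by
    field_simp
    ring
  have hnonneg : 0 ≤ (b - a) * (2 * b ^ 2 - a * (b + a)) / (2 * a * b ^ (m + 3)) := by
    have : 0 ≤ 2 * b ^ 2 - a * (b + a) := by nlinarith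
    have := sub_nonneg.2 hab
    positivity
  linarith

lemma le_kelvinKernel {k : ℕ} (hk : k ≠ 0) {l : ℝ} (hl : 0 < l) {y z : E} (hy : l ≤ ‖y‖)
    (hz : 2 * l ≤ ‖z‖) (hz' : ‖z‖ ≤ 4 * l) (hyz : y ≠ z) :
    3 * (‖y‖ ^ 2 - l ^ 2) / (2 * (5 * ‖y‖) ^ (k + 2)) ≤ kelvinKernel k l y z := by
  have hy0 : 0 < ‖y‖ := hl.trans_le hy
  have hpos : 0 < ‖y - z‖ := norm_pos_iff.2 (sub_ne_zero.2 hyz)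
  have hle := norm_sub_le_reflectedDist hl hy (by linarith : l ≤ ‖z‖)
  have hinv : ‖inversion 0 l y - z‖ ≤ 5 * l := by
    have : ‖inversion 0 l y‖ ≤ l := by
      rw [norm_inversion_zero, div_le_iff₀ hy0]
      nlinarith
    linarith [norm_sub_le (inversion 0 l y) z]
  have hrefl : reflectedDist l y z ≤ 5 * ‖y‖ := by
    rw [reflectedDist, div_le_iff₀ hl]
    nlinarith
  have hsq : 3 * (‖y‖ ^ 2 - l ^ 2) ≤ reflectedDist l y z ^ 2 - ‖y - z‖ ^ 2 := by
    rw [reflectedDist_sq_sub_sq hl.ne' (norm_pos_iff.1 hy0), le_div_iff₀ (by positivity)]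
    have hy2 : 0 ≤ ‖y‖ ^ 2 - l ^ 2 := by nlinarith
    have hz2 : 3 * l ^ 2 ≤ ‖z‖ ^ 2 - l ^ 2 := by nlinarith
    nlinarith
  have hrefl0 : 0 < reflectedDist l y z := hpos.trans_le hle
  calc 3 * (‖y‖ ^ 2 - l ^ 2) / (2 * (5 * ‖y‖) ^ (k + 2))
      ≤ (reflectedDist l y z ^ 2 - ‖y - z‖ ^ 2) / (2 * reflectedDist l y z ^ (k + 2)) :=
        div_le_div₀ (by nlinarith) hsq (by positivity) (by gcongr)
    _ ≤ kelvinKernel k l y z := sq_sub_sq_div_le_inv_pow_sub_inv_pow hk hpos hle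

lemma div_norm_sub_inversion {l : ℝ} (hl : l ≠ 0) {y z : E} (hy : y ≠ 0) (hz : z ≠ 0) :
    l / ‖z‖ / ‖y - inversion 0 l z‖ = (reflectedDist l y z)⁻¹ := by
  have hz0 : ‖z‖ ≠ 0 := norm_ne_zero_iff.2 hz
  have h := dist_inversion_mul_dist_center_eq (R := l) hy hz
  simp only [dist_eq_norm, sub_zero] at h
  rw [reflectedDist, mul_comm ‖y‖, h, inv_div]
  field_simp

lemma div_norm_inversion_sub_inversion {l : ℝ} (hl : l ≠ 0) {y z : E} (hy : y ≠ 0) (hz : z ≠ 0) :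
    l / ‖y‖ * (l / ‖z‖) / ‖inversion 0 l y - inversion 0 l z‖ = ‖y - z‖⁻¹ := by
  have hy0 : ‖y‖ ≠ 0 := norm_ne_zero_iff.2 hy
  have hz0 : ‖z‖ ≠ 0 := norm_ne_zero_iff.2 hz
  have h := dist_inversion_inversion hy hz l
  simp only [dist_eq_norm, sub_zero] at h
  rw [h]
  field_simp

lemma kelvinKernel_mul_sub_kelvinTransform (k m : ℕ) {l : ℝ} (hl : l ≠ 0) (f : E → ℝ) {y z : E}
    (hy : y ≠ 0) (hz : z ≠ 0) :
    kelvinKernel k l y z * (f z - kelvinTransform m l f z) =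
      (f z / ‖y - z‖ ^ k + kelvinTransform (k + m) l (fun z => f z / ‖y - z‖ ^ k) z) -
        (l / ‖y‖) ^ k * (f z / ‖inversion 0 l y - z‖ ^ k +
          kelvinTransform (k + m) l (fun z => f z / ‖inversion 0 l y - z‖ ^ k) z) := by
  have hyz : (reflectedDist l y z ^ k)⁻¹ = (l / ‖y‖) ^ k / ‖inversion 0 l y - z‖ ^ k := by
    rw [reflectedDist, ← inv_pow, ← div_pow, inv_div, div_div]
  have hzy : (reflectedDist l y z ^ k)⁻¹ = (l / ‖z‖) ^ k / ‖y - inversion 0 l z‖ ^ k := by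
    rw [← inv_pow, ← div_norm_sub_inversion hl hy hz, div_pow]
  have hinv : (‖y - z‖ ^ k)⁻¹ =
      (l / ‖y‖) ^ k * (l / ‖z‖) ^ k / ‖inversion 0 l y - inversion 0 l z‖ ^ k := by
    rw [← inv_pow, ← div_norm_inversion_sub_inversion hl hy hz, div_pow, mul_pow]
  simp only [kelvinTransform, kelvinKernel, pow_add]
  linear_combination f z * (-hyz) + (l / ‖z‖) ^ m * f (inversion 0 l z) * (hzy - hinv)

lemma continuousAt_kelvinTransform {u : E → ℝ} (hu : Continuous u) (k : ℕ) {q : ℝ × E}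
    (hq : q.2 ≠ 0) : ContinuousAt (fun q : ℝ × E => kelvinTransform k q.1 u q.2) q :=
  ((continuousAt_fst.div continuousAt_snd.norm (norm_ne_zero_iff.2 hq)).pow k).mul
    (hu.continuousAt.comp (continuousAt_const.inversion continuousAt_fst continuousAt_snd hq))

/-- The function `u` dominates its Kelvin transform outside the sphere of radius `l` about the
origin. This is the property that moving spheres propagate in `l`. -/
def KelvinDominated (k : ℕ) (l : ℝ) (u : E → ℝ) : Prop :=
  ∀ y, l < ‖y‖ → kelvinTransform k l u y ≤ u y

/-- A quantitative form of strict Kelvin domination, which is uniform both as `‖y‖ → l` and as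
`‖y‖ → ∞`. -/
def KelvinGap (k : ℕ) (l : ℝ) (u : E → ℝ) : Prop :=
  ∃ c > 0, ∀ y, l < ‖y‖ →
    c * (‖y‖ ^ 2 - l ^ 2) / ‖y‖ ^ (k + 2) ≤ u y - kelvinTransform k l u y

lemma KelvinGap.of_const_mul {k : ℕ} {l c : ℝ} (hc : 0 < c) {u : E → ℝ}
    (h : KelvinGap k l fun y => c * u y) : KelvinGap k l u := by
  obtain ⟨d, hd, hgap⟩ := h
  refine ⟨d / c, by positivity, fun y hy => ?_⟩
  have h := hgap y hy
  rw [kelvinTransform, mul_left_comm, ← mul_sub, ← div_le_iff₀' hc] at h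
  calc d / c * (‖y‖ ^ 2 - l ^ 2) / ‖y‖ ^ (k + 2)
      = d * (‖y‖ ^ 2 - l ^ 2) / ‖y‖ ^ (k + 2) / c := by ring
    _ ≤ u y - kelvinTransform k l u y := h

variable [FiniteDimensional ℝ E] [MeasurableSpace E] [BorelSpace E]

lemma setIntegral_ball_diff_zero [Nontrivial E] (h : E → ℝ) (l : ℝ) :
    ∫ z in ball 0 l \ {0}, h z = ∫ z in {z | l < ‖z‖}ᶜ, h z := by
  have hcompl : {z : E | l < ‖z‖}ᶜ = closedBall 0 l := by
    ext z
    simp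
  rw [hcompl]
  exact setIntegral_congr_set ((sdiff_null_ae_eq_self (measure_singleton 0)).trans
    (ae_eq_of_subset_of_measure_ge ball_subset_closedBall
      (Measure.addHaar_closedBall_eq_addHaar_ball volume 0 l).le
      measurableSet_ball.nullMeasurableSet measure_closedBall_lt_top.ne))

lemma integral_eq_integral_exterior_add_kelvinTransform [Nontrivial E] {l : ℝ} (hl : 0 < l)
    {h : E → ℝ} (hi : Integrable h) :
    IntegrableOn (fun z => h z + kelvinTransform (2 * Module.finrank ℝ E) l h z) {z | l < ‖z‖} ∧
      ∫ z, h z =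
        ∫ z in {z | l < ‖z‖}, (h z + kelvinTransform (2 * Module.finrank ℝ E) l h z) := by
  set S := {z : E | l < ‖z‖}
  have hS : MeasurableSet S := measurableSet_lt measurable_const measurable_norm
  have hderiv : ∀ z ∈ S, HasFDerivWithinAt (inversion 0 l)
      ((l / ‖z‖) ^ 2 • ((Submodule.span ℝ {z})ᗮ.reflection : E →L[ℝ] E)) S z := fun z hz => by
    have hz0 : z ≠ 0 := norm_pos_iff.1 (hl.trans hz)
    simpa using (hasFDerivAt_inversion (R := l) hz0).hasFDerivWithinAt
  have hinj : Set.InjOn (inversion 0 l) S := (inversion_injective 0 hl.ne').injOn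
  have hcongr (z : E) : |((l / ‖z‖) ^ 2 •
      ((Submodule.span ℝ {z})ᗮ.reflection : E →L[ℝ] E)).det| • h (inversion 0 l z) =
        kelvinTransform (2 * Module.finrank ℝ E) l h z := by
    rw [abs_det_smul_reflection, smul_eq_mul, kelvinTransform]
  have hint := integrableOn_image_iff_integrableOn_abs_det_fderiv_smul volume hS hderiv hinj h
  have heq := integral_image_eq_integral_abs_det_fderiv_smul volume hS hderiv hinj h
  simp only [hcongr] at hint heq
  have hK := hint.1 hi.integrableOn
  refine ⟨hi.integrableOn.add hK, ?_⟩
  rw [integral_add hi.integrableOn hK, ← heq, ← integral_add_compl hS hi,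
    image_inversion_exterior hl, setIntegral_ball_diff_zero]

lemma rieszPotential_sub_kelvinTransform [Nontrivial E] {k m : ℕ}
    (hkm : k + m = 2 * Module.finrank ℝ E) {l : ℝ} (hl : 0 < l) {f : E → ℝ}
    (hint : ∀ y, Integrable fun z => f z / ‖y - z‖ ^ k) {y : E} (hy : y ≠ 0) :
    IntegrableOn (fun z => kelvinKernel k l y z * (f z - kelvinTransform m l f z)) {z | l < ‖z‖} ∧
      rieszPotential k f y - kelvinTransform k l (rieszPotential k f) y =
        ∫ z in {z | l < ‖z‖}, kelvinKernel k l y z * (f z - kelvinTransform m l f z) := by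
  obtain ⟨hi, he⟩ := integral_eq_integral_exterior_add_kelvinTransform hl (hint y)
  obtain ⟨hi', he'⟩ :=
    integral_eq_integral_exterior_add_kelvinTransform hl (hint (inversion 0 l y))
  rw [← hkm] at hi he hi' he'
  have hcongr : Set.EqOn _ _ {z : E | l < ‖z‖} := fun z hz =>
    (kelvinKernel_mul_sub_kelvinTransform k m hl.ne' f hy (norm_pos_iff.1 (hl.trans hz))).symm
  have hmeas : MeasurableSet {z : E | l < ‖z‖} := measurableSet_lt measurable_const measurable_norm
  refine ⟨(hi.sub (hi'.const_mul _)).congr_fun hcongr hmeas, ?_⟩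
  rw [← setIntegral_congr_fun hmeas hcongr,
    integral_sub hi (hi'.const_mul _), integral_const_mul, ← he, ← he']
  rfl

lemma setIntegral_kelvinKernel_mul_mono [Nontrivial E] (k : ℕ) {l : ℝ} (hl : 0 < l) {g : E → ℝ}
    (hg : ∀ z, l < ‖z‖ → 0 ≤ g z) {A : Set E} (hA : A ⊆ {z | l < ‖z‖}) {y : E} (hy : l < ‖y‖)
    (hi : IntegrableOn (fun z => kelvinKernel k l y z * g z) {z | l < ‖z‖}) :
    ∫ z in A, kelvinKernel k l y z * g z ≤ ∫ z in {z | l < ‖z‖}, kelvinKernel k l y z * g z := by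
  refine setIntegral_mono_set hi ?_ hA.eventuallyLE
  rw [EventuallyLE, ae_restrict_iff' (measurableSet_lt measurable_const measurable_norm)]
  filter_upwards [Measure.ae_ne volume y] with z hz hzl
  exact mul_nonneg (kelvinKernel_nonneg k hl hy.le (le_of_lt hzl) hz.symm) (hg z hzl)

lemma setIntegral_closedBall_pos {g : E → ℝ} {x : E} {r : ℝ} (hr : 0 < r)
    (hi : IntegrableOn g (closedBall x r)) (hg : ∀ z ∈ closedBall x r, 0 < g z) :
    0 < ∫ z in closedBall x r, g z := by
  rw [setIntegral_pos_iff_support_of_nonneg_ae _ hi]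
  · refine (measure_ball_pos volume x hr).trans_le (measure_mono fun z hz => ?_)
    exact ⟨(hg z (ball_subset_closedBall hz)).ne', ball_subset_closedBall hz⟩
  · filter_upwards [self_mem_ae_restrict measurableSet_closedBall] with z hz
    exact (hg z hz).le

lemma kelvinGap_rieszPotential [Nontrivial E] {k m : ℕ} (hk : k ≠ 0)
    (hkm : k + m = 2 * Module.finrank ℝ E) {l : ℝ} (hl : 0 < l) {f : E → ℝ} (hf : Continuous f)
    (hint : ∀ y, Integrable fun z => f z / ‖y - z‖ ^ k)
    (hlt : ∀ z, l < ‖z‖ → kelvinTransform m l f z < f z) :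
    KelvinGap k l (rieszPotential k f) := by
  obtain ⟨x, hx⟩ : ∃ x : E, ‖x‖ = 3 * l := exists_norm_eq E (by positivity)
  set A := closedBall x l
  set g := fun z => f z - kelvinTransform m l f z
  have hA : ∀ z ∈ A, 2 * l ≤ ‖z‖ ∧ ‖z‖ ≤ 4 * l := fun z hz => by
    have hzx : ‖z - x‖ ≤ l := mem_closedBall_iff_norm.1 hz
    constructor <;> linarith [norm_sub_norm_le z x, norm_sub_norm_le x z, norm_sub_rev x z]
  have hAl : A ⊆ {z | l < ‖z‖} := fun z hz => (by linarith [(hA z hz).1] : l < ‖z‖)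
  have hg : ∀ z, l < ‖z‖ → 0 < g z := fun z hz => sub_pos.2 (hlt z hz)
  have hgi : IntegrableOn g A := (hf.continuousOn.sub fun z hz =>
    ((continuousAt_kelvinTransform hf m (q := (l, z)) (norm_pos_iff.1 (hl.trans (hAl hz)))).comp
      (f := Prod.mk l) (by fun_prop)).continuousWithinAt).integrableOn_compact
        (isCompact_closedBall x l)
  have hpos : 0 < ∫ z in A, g z := setIntegral_closedBall_pos hl hgi fun z hz => hg z (hAl hz)
  refine ⟨3 / (2 * 5 ^ (k + 2)) * ∫ z in A, g z, by positivity, fun y hy => ?_⟩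
  obtain ⟨hi, heq⟩ :=
    rieszPotential_sub_kelvinTransform hkm hl hint (norm_pos_iff.1 (hl.trans hy))
  calc 3 / (2 * 5 ^ (k + 2)) * (∫ z in A, g z) * (‖y‖ ^ 2 - l ^ 2) / ‖y‖ ^ (k + 2)
      = ∫ z in A, 3 * (‖y‖ ^ 2 - l ^ 2) / (2 * (5 * ‖y‖) ^ (k + 2)) * g z := by
        rw [integral_const_mul, mul_pow]
        field_simp
    _ ≤ ∫ z in A, kelvinKernel k l y z * g z := by
        refine setIntegral_mono_on_ae (hgi.const_mul _) (hi.mono_set hAl)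
          measurableSet_closedBall ?_
        filter_upwards [Measure.ae_ne volume y] with z hz hzA
        exact mul_le_mul_of_nonneg_right
          (le_kelvinKernel hk hl hy.le (hA z hzA).1 (hA z hzA).2 hz.symm) (hg z (hAl hzA)).le
    _ ≤ _ := (setIntegral_kelvinKernel_mul_mono k hl (fun z hz => (hg z hz).le) hAl hy hi).trans_eq
        heq.symm

lemma rieszPotential_pos [Nontrivial E] {k : ℕ} {f : E → ℝ} (hf : Continuous f)
    (h0 : ∀ z, 0 ≤ f z) {x : E} (hx : 0 < f x) {y : E}
    (hint : Integrable fun z => f z / ‖y - z‖ ^ k) : 0 < rieszPotential k f y := by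
  rw [rieszPotential,
    integral_pos_iff_support_of_nonneg (fun z => div_nonneg (h0 z) (by positivity)) hint]
  have hpos : 0 < volume ({z | 0 < f z} \ {y}) := by
    rw [measure_sdiff_null (measure_singleton y)]
    exact (isOpen_lt continuous_const hf).measure_pos volume ⟨x, hx⟩
  refine hpos.trans_le (measure_mono fun z hz => ?_)
  have hfz : 0 < f z := hz.1
  have hyz : 0 < ‖y - z‖ := norm_pos_iff.2 (sub_ne_zero.2 (Ne.symm hz.2))
  exact (div_pos hfz (pow_pos hyz k)).ne'

lemma exists_div_norm_pow_le_rieszPotential {k : ℕ} {f : E → ℝ} (hf : Continuous f)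
    (h0 : ∀ z, 0 < f z) (hint : ∀ y, Integrable fun z => f z / ‖y - z‖ ^ k) {r : ℝ} (hr : 0 < r) :
    ∃ c > 0, ∀ y, r < ‖y‖ → c / ‖y‖ ^ k ≤ rieszPotential k f y := by
  have hi : IntegrableOn f (closedBall 0 r) :=
    hf.continuousOn.integrableOn_compact (isCompact_closedBall 0 r)
  have hpos : 0 < ∫ z in closedBall 0 r, f z := setIntegral_closedBall_pos hr hi fun z _ => h0 z
  refine ⟨(∫ z in closedBall 0 r, f z) / 2 ^ k, by positivity, fun y hy => ?_⟩
  calc (∫ z in closedBall 0 r, f z) / 2 ^ k / ‖y‖ ^ k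
      = ∫ z in closedBall 0 r, f z / (2 * ‖y‖) ^ k := by rw [integral_div, mul_pow, div_div]
    _ ≤ ∫ z in closedBall 0 r, f z / ‖y - z‖ ^ k := by
        refine setIntegral_mono_on (hi.div_const _) (hint y).integrableOn
          measurableSet_closedBall fun z hz => ?_
        have hzr : ‖z‖ ≤ r := mem_closedBall_zero_iff.1 hz
        have hle : ‖y - z‖ ≤ 2 * ‖y‖ := by linarith [norm_sub_le y z]
        have hyz : 0 < ‖y - z‖ := by linarith [norm_sub_norm_le y z]
        have := h0 z
        gcongr
    _ ≤ rieszPotential k f y := setIntegral_le_integral (hint y)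
        (.of_forall fun z => div_nonneg (h0 z).le (by positivity))

end Kelvin

section MovingSpheres

open EuclideanGeometry

variable {E : Type*} [NormedAddCommGroup E] [InnerProductSpace ℝ E]

/-- The radial derivative of `‖x‖ ^ (k / 2) * u x`, up to a positive factor. Where it is
nonnegative along a ray, `u` dominates its Kelvin transform of order `k`. -/
noncomputable def radialGrowth (k : ℕ) (u : E → ℝ) (x : E) : ℝ := k * u x + 2 * fderiv ℝ u x x

lemma continuous_radialGrowth (k : ℕ) {u : E → ℝ} (hu : ContDiff ℝ 1 u) :
    Continuous (radialGrowth k u) := by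
  have := hu.continuous
  have := hu.continuous_fderiv one_ne_zero
  unfold radialGrowth
  fun_prop

lemma hasDerivAt_comp_smul {u : E → ℝ} (hu : Differentiable ℝ u) (y : E) (t : ℝ) :
    HasDerivAt (fun t : ℝ => u (t • y)) (fderiv ℝ u (t • y) y) t := by
  have h : HasDerivAt (fun t : ℝ => t • y) y t := by simpa using (hasDerivAt_id t).smul_const y
  exact (hu (t • y)).hasFDerivAt.comp_hasDerivAt t h

lemma monotoneOn_pow_mul_sq_of_radialGrowth_nonneg {k : ℕ} (hk : k ≠ 0) {u : E → ℝ}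
    (hu : Differentiable ℝ u) (h0 : ∀ x, 0 ≤ u x) (y : E) {τ : ℝ} (hτ : 0 < τ)
    (hgrowth : ∀ t ∈ Set.Icc τ 1, 0 ≤ radialGrowth k u (t • y)) :
    MonotoneOn (fun t : ℝ => t ^ k * u (t • y) ^ 2) (Set.Icc τ 1) := by
  obtain ⟨m, rfl⟩ := Nat.exists_eq_add_one_of_ne_zero hk
  have hderiv (t : ℝ) : HasDerivAt (fun t : ℝ => t ^ (m + 1) * u (t • y) ^ 2)
      (t ^ m * u (t • y) * radialGrowth (m + 1) u (t • y)) t := by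
    refine ((hasDerivAt_pow (m + 1) t).mul ((hasDerivAt_comp_smul hu y t).pow 2)).congr_deriv ?_
    simp only [radialGrowth, map_smul, smul_eq_mul, Nat.add_sub_cancel, Pi.pow_apply]
    push_cast
    ring
  refine monotoneOn_of_deriv_nonneg (convex_Icc _ _)
    (fun t _ => (hderiv t).continuousAt.continuousWithinAt)
    (fun t _ => (hderiv t).differentiableAt.differentiableWithinAt) fun t ht => ?_
  have ht' : t ∈ Set.Icc τ 1 := interior_subset ht
  have ht0 : 0 ≤ t := hτ.le.trans ht'.1
  rw [(hderiv t).deriv]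
  exact mul_nonneg (mul_nonneg (pow_nonneg ht0 m) (h0 _)) (hgrowth t ht')

lemma kelvinTransform_le_of_radialGrowth_nonneg {k : ℕ} (hk : k ≠ 0) {u : E → ℝ}
    (hu : Differentiable ℝ u) (h0 : ∀ x, 0 ≤ u x) {l : ℝ} (hl : 0 < l) {y : E} (hy : l ≤ ‖y‖)
    (hgrowth : ∀ t ∈ Set.Icc ((l / ‖y‖) ^ 2) 1, 0 ≤ radialGrowth k u (t • y)) :
    kelvinTransform k l u y ≤ u y := by
  have hy0 : 0 < ‖y‖ := hl.trans_le hy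
  have hτ1 : (l / ‖y‖) ^ 2 ≤ 1 := pow_le_one₀ (by positivity) ((div_le_one hy0).2 hy)
  have hmono := monotoneOn_pow_mul_sq_of_radialGrowth_nonneg hk hu h0 y (by positivity) hgrowth
    (Set.left_mem_Icc.2 hτ1) (Set.right_mem_Icc.2 hτ1) hτ1
  simp only [one_pow, one_mul, one_smul, ← inversion_zero_apply] at hmono
  refine (abs_le_of_sq_le_sq' ?_ (h0 y)).2
  rwa [kelvinTransform, mul_pow, pow_right_comm]

lemma nonneg_of_hasDerivAt_of_nonneg_right {g : ℝ → ℝ} {g' a : ℝ} (hg : HasDerivAt g g' a)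
    (ha : g a = 0) (h : ∀ t, a < t → 0 ≤ g t) : 0 ≤ g' := by
  have hslope := (hasDerivAt_iff_tendsto_slope.1 hg).mono_left (nhdsGT_le_nhdsNE a)
  refine ge_of_tendsto hslope ?_
  filter_upwards [self_mem_nhdsWithin] with t ht
  rw [slope_def_field, ha, sub_zero]
  exact div_nonneg (h t ht) (sub_nonneg.2 (le_of_lt ht))

lemma kelvinTransform_smul_of_norm_eq (k : ℕ) (u : E → ℝ) {l t : ℝ} (hl : 0 < l) (ht : 0 < t)
    {y : E} (hy : ‖y‖ = l) : kelvinTransform k l u (t • y) = t⁻¹ ^ k * u (t⁻¹ • y) := by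
  have hdiv : l / ‖t • y‖ = t⁻¹ := by
    rw [norm_smul, Real.norm_of_nonneg ht.le, hy]
    field_simp
  have hsq : t⁻¹ ^ 2 * t = t⁻¹ := by field_simp
  rw [kelvinTransform, inversion_zero_apply, hdiv, smul_smul, hsq]

lemma KelvinGap.radialGrowth_pos {k : ℕ} {l : ℝ} {u : E → ℝ} (h : KelvinGap k l u) (hl : 0 < l)
    (hu : Differentiable ℝ u) {y : E} (hy : ‖y‖ = l) : 0 < radialGrowth k u y := by
  obtain ⟨c, hc, hgap⟩ := h
  have hC : 0 < c / l ^ k := by positivity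
  have hout : HasDerivAt (fun t : ℝ => u (t • y)) (fderiv ℝ u y y) 1 := by
    simpa using hasDerivAt_comp_smul hu y 1
  have hin : HasDerivAt (fun t : ℝ => u (t⁻¹ • y)) (-fderiv ℝ u y y) 1 := by
    have h := (hasDerivAt_comp_smul hu y (1 : ℝ)⁻¹).comp 1 (hasDerivAt_inv one_ne_zero)
    simpa [Function.comp_def] using h
  have hderiv := (((hasDerivAt_pow (k + 2) (1 : ℝ)).mul hout).sub
    ((hasDerivAt_pow 2 (1 : ℝ)).mul hin)).sub
      (((hasDerivAt_pow 2 (1 : ℝ)).sub_const 1).const_mul (c / l ^ k))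
  have hnonneg := nonneg_of_hasDerivAt_of_nonneg_right hderiv (by simp) fun t ht => ?_
  · simp only [Nat.cast_add, one_pow, one_smul, inv_one] at hnonneg
    push_cast at hnonneg
    rw [radialGrowth]
    linarith
  · have ht0 : 0 < t := one_pos.trans ht
    have hn : ‖t • y‖ = t * l := by rw [norm_smul, Real.norm_of_nonneg ht0.le, hy]
    have h := hgap (t • y) (by rw [hn]; nlinarith)
    rw [kelvinTransform_smul_of_norm_eq k u hl ht0 hy, hn, div_le_iff₀ (by positivity)] at h
    have hl' : c * ((t * l) ^ 2 - l ^ 2) = l ^ (k + 2) * (c / l ^ k * (t ^ 2 - 1)) := by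
      field_simp
      ring
    have ht' : t⁻¹ ^ k * t ^ k = 1 := by rw [← mul_pow, inv_mul_cancel₀ ht0.ne', one_pow]
    have hr : (u (t • y) - t⁻¹ ^ k * u (t⁻¹ • y)) * (t * l) ^ (k + 2) =
        l ^ (k + 2) * (t ^ (k + 2) * u (t • y) - t ^ 2 * u (t⁻¹ • y)) := by
      linear_combination -l ^ (k + 2) * t ^ 2 * u (t⁻¹ • y) * ht'
    rw [hl', hr] at h
    simpa using le_of_mul_le_mul_left h (by positivity)

lemma eventually_kelvinTransform_le_of_norm_eq {k : ℕ} (hk : k ≠ 0) {u : E → ℝ}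
    (hu : ContDiff ℝ 1 u) (h0 : ∀ x, 0 ≤ u x) {l : ℝ} (hl : 0 < l) {y : E} (hy : ‖y‖ = l)
    (hpos : 0 < radialGrowth k u y) :
    ∀ᶠ q : ℝ × E in 𝓝 (l, y), q.1 < ‖q.2‖ → kelvinTransform k q.1 u q.2 ≤ u q.2 := by
  obtain ⟨δ, hδ, hball⟩ := Metric.eventually_nhds_iff.1
    ((continuous_radialGrowth k hu).continuousAt.eventually_const_lt hpos)
  have hcont : ContinuousAt
      (fun q : ℝ × E => ‖q.2 - y‖ + (1 - (q.1 / ‖q.2‖) ^ 2) * ‖q.2‖) (l, y) := by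
    have hdiv : ContinuousAt (fun q : ℝ × E => q.1 / ‖q.2‖) (l, y) :=
      continuousAt_fst.div continuousAt_snd.norm (by simp [hy, hl.ne'])
    fun_prop
  have hlt : ‖y - y‖ + (1 - (l / ‖y‖) ^ 2) * ‖y‖ < δ := by simpa [hy, hl.ne'] using hδ
  filter_upwards [hcont.eventually_lt_const hlt, continuousAt_fst.eventually_const_lt hl]
    with q hqδ hq0 hq
  refine kelvinTransform_le_of_radialGrowth_nonneg hk (hu.differentiable one_ne_zero) h0 hq0 hq.le
    fun t ht => (hball ?_).le
  calc dist (t • q.2) y = ‖(q.2 - y) - (1 - t) • q.2‖ := by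
        rw [dist_eq_norm, sub_smul, one_smul]
        congr 1
        abel
    _ ≤ ‖q.2 - y‖ + (1 - t) * ‖q.2‖ := by
        refine (norm_sub_le _ _).trans_eq ?_
        rw [norm_smul, Real.norm_of_nonneg (sub_nonneg.2 ht.2)]
    _ ≤ ‖q.2 - y‖ + (1 - (q.1 / ‖q.2‖) ^ 2) * ‖q.2‖ := by
        have := ht.1
        gcongr
    _ < δ := hqδ

lemma KelvinGap.lt {k : ℕ} {l : ℝ} {u : E → ℝ} (h : KelvinGap k l u) (hl : 0 < l) {y : E}
    (hy : l < ‖y‖) : kelvinTransform k l u y < u y := by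
  obtain ⟨c, hc, hgap⟩ := h
  have hy0 : 0 < ‖y‖ := hl.trans hy
  have hsq : 0 < ‖y‖ ^ 2 - l ^ 2 := by nlinarith
  have hpos : 0 < c * (‖y‖ ^ 2 - l ^ 2) / ‖y‖ ^ (k + 2) := by positivity
  exact sub_pos.1 (hpos.trans_le (hgap y hy))

lemma KelvinGap.eventually_kelvinTransform_le {k : ℕ} (hk : k ≠ 0) {l : ℝ} {u : E → ℝ}
    (h : KelvinGap k l u) (hl : 0 < l) (hu : ContDiff ℝ 1 u) (h0 : ∀ x, 0 ≤ u x) (y : E) :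
    ∀ᶠ q : ℝ × E in 𝓝 (l, y), q.1 < ‖q.2‖ → kelvinTransform k q.1 u q.2 ≤ u q.2 := by
  rcases lt_trichotomy ‖y‖ l with hlt | heq | hgt
  · filter_upwards [continuousAt_snd.norm.eventually_lt continuousAt_fst hlt] with q hq hq'
    exact absurd hq' hq.not_gt
  · exact eventually_kelvinTransform_le_of_norm_eq hk hu h0 hl heq
      (h.radialGrowth_pos hl (hu.differentiable one_ne_zero) heq)
  · filter_upwards [(continuousAt_kelvinTransform hu.continuous k
      (norm_pos_iff.1 (hl.trans hgt))).eventually_lt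
        (hu.continuous.continuousAt.comp continuousAt_snd) (h.lt hl hgt)] with q hq _
    exact hq.le

lemma kelvinTransform_eq_inversion_one (k : ℕ) (l : ℝ) (u : E → ℝ) (y : E) :
    kelvinTransform k l u y = l ^ k * u (l ^ 2 • inversion 0 1 y) / ‖y‖ ^ k := by
  rw [kelvinTransform, inversion_zero_apply, inversion_zero_apply, smul_smul, ← mul_pow,
    mul_one_div, div_pow, div_mul_eq_mul_div]

lemma KelvinGap.eventually_cobounded_kelvinTransform_le {k : ℕ} {l : ℝ} {u : E → ℝ}
    (h : KelvinGap k l u) (hl : 0 < l) (hu : Continuous u) :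
    ∀ᶠ q : ℝ × E in 𝓝 l ×ˢ Bornology.cobounded E, kelvinTransform k q.1 u q.2 ≤ u q.2 := by
  obtain ⟨c, hc, hgap⟩ := h
  have hinv : Tendsto (fun y : E => inversion 0 1 y) (Bornology.cobounded E) (𝓝 0) := by
    rw [tendsto_zero_iff_norm_tendsto_zero]
    simpa only [norm_inversion_zero, one_pow, one_div, Function.comp_def] using
      tendsto_inv_atTop_zero.comp tendsto_norm_cobounded_atTop
  have hev : ∀ᶠ q : ℝ × E in 𝓝 l ×ˢ 𝓝 0,
      q.1 ^ k * u (q.1 ^ 2 • q.2) - l ^ k * u (l ^ 2 • q.2) < 3 / 4 * c := by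
    rw [← nhds_prod_eq]
    have hcont : Continuous fun q : ℝ × E =>
        q.1 ^ k * u (q.1 ^ 2 • q.2) - l ^ k * u (l ^ 2 • q.2) := by fun_prop
    refine hcont.continuousAt.eventually_lt_const ?_
    simp only [smul_zero, sub_self]
    positivity
  have hfar : ∀ᶠ y : E in Bornology.cobounded E, 2 * l < ‖y‖ :=
    tendsto_norm_cobounded_atTop.eventually_gt_atTop _
  filter_upwards [(tendsto_id.prodMap hinv).eventually hev, hfar.prod_inr (𝓝 l)] with q hq hy
  have hy0 : 0 < ‖q.2‖ := by linarith
  have hg := hgap q.2 (by linarith)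
  have hlow : 3 / 4 * c / ‖q.2‖ ^ k ≤ c * (‖q.2‖ ^ 2 - l ^ 2) / ‖q.2‖ ^ (k + 2) := by
    rw [div_le_div_iff₀ (by positivity) (by positivity), pow_add]
    have : 3 / 4 * ‖q.2‖ ^ 2 ≤ ‖q.2‖ ^ 2 - l ^ 2 := by nlinarith
    have : 3 / 4 * ‖q.2‖ ^ 2 * (c * ‖q.2‖ ^ k) ≤ (‖q.2‖ ^ 2 - l ^ 2) * (c * ‖q.2‖ ^ k) := by gcongr
    linarith
  have hdiff : kelvinTransform k q.1 u q.2 - kelvinTransform k l u q.2 ≤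
      3 / 4 * c / ‖q.2‖ ^ k := by
    rw [kelvinTransform_eq_inversion_one, kelvinTransform_eq_inversion_one, ← sub_div]
    exact div_le_div_of_nonneg_right hq.le (by positivity)
  linarith

lemma kelvinDominated_zero (k : ℕ) (l : ℝ) : KelvinDominated k l (0 : E → ℝ) :=
  fun y _ => by simp [kelvinTransform]

lemma KelvinDominated.of_frequently {k : ℕ} {l : ℝ} {u : E → ℝ} (hl : 0 < l) (hu : Continuous u)
    (h : ∃ᶠ μ in 𝓝 l, KelvinDominated k μ u) : KelvinDominated k l u := by
  intro y hy
  have hcont : ContinuousAt (fun μ : ℝ => kelvinTransform k μ u y) l :=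
    (continuousAt_kelvinTransform hu k (q := (l, y)) (norm_pos_iff.1 (hl.trans hy))).comp
      (f := fun μ : ℝ => (μ, y)) (by fun_prop)
  by_contra! hlt
  refine h ?_
  filter_upwards [hcont.eventually_const_lt hlt, gt_mem_nhds hy] with μ hμ hμy hdom
  exact (hdom y hμy).not_gt hμ

lemma forall_pos_of_frequently_of_eventually {P : ℝ → Prop} (hstart : ∀ᶠ l in 𝓝[>] 0, P l)
    (hclosed : ∀ l > 0, (∃ᶠ μ in 𝓝 l, P μ) → P l) (hopen : ∀ l > 0, P l → ∀ᶠ μ in 𝓝 l, P μ) :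
    ∀ l > 0, P l := by
  intro l hl
  obtain ⟨a, haP, ha, hal⟩ := (hstart.and (Ioo_mem_nhdsGT hl)).exists
  have hIcc : Set.Icc a l ⊆ {μ | P μ} := by
    refine IsClosed.Icc_subset_of_forall_exists_gt (isClosed_of_closure_subset fun μ hμ => ?_) haP
      fun μ hμ b hb => ?_
    · have hμI : μ ∈ Set.Icc a l := closure_minimal Set.inter_subset_right isClosed_Icc hμ
      refine ⟨hclosed μ (ha.trans_le hμI.1) ?_, hμI⟩
      exact (mem_closure_iff_frequently.1 hμ).mono fun _ h => h.1
    · have hμ0 : 0 < μ := ha.trans_le hμ.2.1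
      have hnear : ∀ᶠ ν in 𝓝[>] μ, P ν := nhdsWithin_le_nhds (hopen μ hμ0 hμ.1)
      exact (hnear.and (Ioc_mem_nhdsGT hb)).exists
  exact hIcc ⟨hal.le, le_rfl⟩

lemma pow_mul_le_of_forall_kelvinDominated {k : ℕ} {u : E → ℝ}
    (h : ∀ x₀, ∀ l > 0, KelvinDominated k l fun y => u (x₀ + y)) {a b : E} (hab : a ≠ b) {q : ℝ}
    (hq0 : 0 < q) (hq1 : q < 1) : q ^ k * u b ≤ u a := by
  have hq2 : 1 - q ^ 2 ≠ 0 := by nlinarith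
  -- Centre the sphere on the line through `a` and `b` so that inversion sends `a` to `b`.
  set y : E := (1 - q ^ 2)⁻¹ • (a - b)
  have hy0 : 0 < ‖y‖ := norm_pos_iff.2 (smul_ne_zero (inv_ne_zero hq2) (sub_ne_zero.2 hab))
  have hdom := h (a - y) (q * ‖y‖) (by positivity) y (mul_lt_of_lt_one_left hy0 hq1)
  have hinv : a - y + q ^ 2 • y = b := by
    have hsub : (1 - q ^ 2) • y = a - b := smul_inv_smul₀ hq2 _
    rw [sub_smul, one_smul] at hsub
    rw [sub_add, hsub, sub_sub_cancel]
  simpa only [kelvinTransform, inversion_zero_apply, mul_div_cancel_right₀ _ hy0.ne', hinv,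
    sub_add_cancel] using hdom

lemma le_of_forall_kelvinDominated {k : ℕ} {u : E → ℝ}
    (h : ∀ x₀, ∀ l > 0, KelvinDominated k l fun y => u (x₀ + y)) (a b : E) : u b ≤ u a := by
  rcases eq_or_ne a b with rfl | hab
  · rfl
  have hlim : Tendsto (fun q : ℝ => q ^ k * u b) (𝓝[<] 1) (𝓝 (u b)) := by
    have hcont : Continuous fun q : ℝ => q ^ k * u b := by fun_prop
    simpa using (hcont.tendsto 1).mono_left nhdsWithin_le_nhds
  refine le_of_tendsto hlim ?_
  filter_upwards [Ioo_mem_nhdsLT one_pos] with q hq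
  exact pow_mul_le_of_forall_kelvinDominated h hab hq.1 hq.2

variable [FiniteDimensional ℝ E]

lemma KelvinGap.eventually_kelvinDominated {k : ℕ} (hk : k ≠ 0) {l : ℝ} {u : E → ℝ}
    (h : KelvinGap k l u) (hl : 0 < l) (hu : ContDiff ℝ 1 u) (h0 : ∀ x, 0 ≤ u x) :
    ∀ᶠ μ in 𝓝 l, KelvinDominated k μ u := by
  obtain ⟨P, hP, Q, hQ, hPQ⟩ :=
    eventually_prod_iff.1 (h.eventually_cobounded_kelvinTransform_le hl hu.continuous)
  obtain ⟨M, -, hM⟩ := (hasBasis_cobounded_compl_closedBall (0 : E)).eventually_iff.1 hQ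
  filter_upwards [hP, (isCompact_closedBall (0 : E) M).eventually_forall_of_forall_eventually
    (P := fun μ y => μ < ‖y‖ → kelvinTransform k μ u y ≤ u y)
    fun y _ => h.eventually_kelvinTransform_le hk hl hu h0 y] with μ hμP hμ y hy
  by_cases hyM : y ∈ closedBall 0 M
  · exact hμ y hyM hy
  · exact hPQ hμP (hM hyM)

lemma eventually_nhdsGT_zero_kelvinDominated_of_div_pow_le {k : ℕ} (hk : k ≠ 0) {u : E → ℝ}
    (hu : ContDiff ℝ 1 u) (h0 : ∀ x, 0 < u x)
    (hlow : ∀ r > 0, ∃ c > 0, ∀ y, r < ‖y‖ → c / ‖y‖ ^ k ≤ u y) :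
    ∀ᶠ l in 𝓝[>] (0 : ℝ), KelvinDominated k l u := by
  have hpos : 0 < radialGrowth k u 0 := by
    have := h0 0
    simp only [radialGrowth, map_zero, mul_zero, add_zero]
    positivity
  obtain ⟨δ, hδ, hball⟩ := Metric.eventually_nhds_iff.1
    ((continuous_radialGrowth k hu).continuousAt.eventually_const_lt hpos)
  obtain ⟨c, hc, hcu⟩ := hlow (δ / 2) (half_pos hδ)
  obtain ⟨M, hM⟩ :=
    (isCompact_closedBall (0 : E) 1).exists_bound_of_continuousOn hu.continuous.continuousOn
  have hsmall : ∀ᶠ l in 𝓝 (0 : ℝ), l ^ k * M < c := by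
    have hcont : Continuous fun l : ℝ => l ^ k * M := by fun_prop
    exact hcont.continuousAt.eventually_lt_const (by simpa [hk] using hc)
  filter_upwards [self_mem_nhdsWithin, nhdsWithin_le_nhds hsmall,
    nhdsWithin_le_nhds (gt_mem_nhds one_pos)] with l hl hlM hl1 y hy
  have hl0 : 0 < l := hl
  have hy0 : 0 < ‖y‖ := hl0.trans hy
  rcases lt_or_ge ‖y‖ δ with hyδ | hyδ
  · refine kelvinTransform_le_of_radialGrowth_nonneg hk (hu.differentiable one_ne_zero)
      (fun x => (h0 x).le) hl0 hy.le fun t ht => (hball ?_).le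
    have ht0 : 0 ≤ t := le_trans (by positivity) ht.1
    rw [dist_zero_right, norm_smul, Real.norm_of_nonneg ht0]
    nlinarith [ht.2]
  · have hinv : u (inversion 0 l y) ≤ M := by
      refine (le_abs_self _).trans (hM _ ?_)
      rw [mem_closedBall_zero_iff, norm_inversion_zero, div_le_one hy0]
      nlinarith
    calc kelvinTransform k l u y ≤ (l / ‖y‖) ^ k * M := by
          unfold kelvinTransform
          gcongr
      _ = l ^ k * M / ‖y‖ ^ k := by rw [div_pow, div_mul_eq_mul_div]
      _ ≤ c / ‖y‖ ^ k := by gcongr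
      _ ≤ u y := hcu y (by linarith)

end MovingSpheres

section System

variable {n p : ℕ} {s : ℝ} {U : Fin p → EuclideanSpace ℝ (Fin n) → ℝ}

lemma vnorm_nonneg (U : Fin p → EuclideanSpace ℝ (Fin n) → ℝ) (x : EuclideanSpace ℝ (Fin n)) :
    0 ≤ vnorm U x :=
  Real.sqrt_nonneg _

lemma le_vnorm (U : Fin p → EuclideanSpace ℝ (Fin n) → ℝ) (x : EuclideanSpace ℝ (Fin n))
    (i : Fin p) : U i x ≤ vnorm U x :=
  Real.le_sqrt_of_sq_le
    (Finset.single_le_sum (f := fun i => U i x ^ 2) (fun _ _ => sq_nonneg _) (Finset.mem_univ i))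

lemma mul_vnorm_le {x z : EuclideanSpace ℝ (Fin n)} {a : ℝ} (ha : 0 ≤ a) (h0 : ∀ i, 0 ≤ U i x)
    (h : ∀ i, a * U i x ≤ U i z) : a * vnorm U x ≤ vnorm U z := by
  refine Real.le_sqrt_of_sq_le ?_
  rw [mul_pow, vnorm, Real.sq_sqrt (Finset.sum_nonneg fun i _ => sq_nonneg _), Finset.mul_sum]
  refine Finset.sum_le_sum fun i _ => ?_
  rw [← mul_pow]
  exact pow_le_pow_left₀ (mul_nonneg ha (h0 i)) (h i) 2

/-- Nonnegative `C⁴` solutions `U` of `Δ²uᵢ = |U|^(s-1) uᵢ` on the whole space. -/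
structure IsNonnegSolution (s : ℝ) (U : Fin p → EuclideanSpace ℝ (Fin n) → ℝ) : Prop where
  nonneg : ∀ i x, 0 ≤ U i x
  contDiff : ∀ i, ContDiff ℝ 4 (U i)
  bilap_eq : ∀ i x, bilap (U i) x = vnorm U x ^ (s - 1) * U i x

namespace IsNonnegSolution

lemma bilapSupersolution (h : IsNonnegSolution s U) (hs : 1 < s) (i : Fin p) :
    BilapSupersolution s (U i) where
  contDiff := h.contDiff i
  nonneg := h.nonneg i
  rpow_le_bilap x := by
    rw [h.bilap_eq]
    rcases (h.nonneg i x).eq_or_lt with hzero | hpos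
    · rw [← hzero, Real.zero_rpow (by linarith), mul_zero]
    · rw [← sub_add_cancel s 1, Real.rpow_add_one hpos.ne', add_sub_cancel_right]
      have := le_vnorm U x i
      have : 0 ≤ s - 1 := by linarith
      gcongr

lemma bilap_pos (h : IsNonnegSolution s U) {i : Fin p} {x : EuclideanSpace ℝ (Fin n)}
    (hx : 0 < U i x) : 0 < bilap (U i) x := by
  have := hx.trans_le (le_vnorm U x i)
  rw [h.bilap_eq]
  positivity

lemma comp_add_left (h : IsNonnegSolution s U) (x₀ : EuclideanSpace ℝ (Fin n)) :
    IsNonnegSolution s fun i y => U i (x₀ + y) where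
  nonneg i _ := h.nonneg i _
  contDiff i := (h.contDiff i).comp (contDiff_const.add contDiff_id)
  bilap_eq i x := by
    have htrans := bilap_comp_add_smul (u := U i) 1 1 x₀ x
    simp only [one_mul, one_smul, one_pow] at htrans
    rw [htrans, h.bilap_eq]
    rfl

lemma rpow_mul_bilap_le (h : IsNonnegSolution s U) (hs : 1 < s) (i : Fin p)
    {x z : EuclideanSpace ℝ (Fin n)} {a : ℝ} (ha : 0 < a) (hle : ∀ j, a * U j x ≤ U j z) :
    a ^ s * bilap (U i) x ≤ bilap (U i) z :=
  calc a ^ s * bilap (U i) x = (a * vnorm U x) ^ (s - 1) * (a * U i x) := by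
        rw [h.bilap_eq, Real.mul_rpow ha.le (vnorm_nonneg U x), Real.rpow_sub_one ha.ne']
        field_simp
    _ ≤ vnorm U z ^ (s - 1) * U i z := by
        have := mul_vnorm_le ha.le (h.nonneg · x) hle
        have := vnorm_nonneg U x
        have := vnorm_nonneg U z
        have := h.nonneg i x
        have := hle i
        have : 0 ≤ s - 1 := by linarith
        gcongr
    _ = bilap (U i) z := (h.bilap_eq i z).symm

-- Subcriticality enters only here, through `(l / ‖z‖) ^ (k + 8) < (l / ‖z‖) ^ (k * s)`.
lemma kelvinTransform_bilap_lt (h : IsNonnegSolution s U) (hs : 1 < s) {k : ℕ}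
    (hsk : s * k < k + 8) {l : ℝ} (hl : 0 < l) (hdom : ∀ j, KelvinDominated k l (U j)) {i : Fin p}
    (hpos : ∀ x, 0 < U i x) {z : EuclideanSpace ℝ (Fin n)} (hz : l < ‖z‖) :
    kelvinTransform (k + 8) l (bilap (U i)) z < bilap (U i) z := by
  have hq0 : 0 < l / ‖z‖ := div_pos hl (hl.trans hz)
  have hq1 : l / ‖z‖ < 1 := (div_lt_one (hl.trans hz)).2 hz
  have hexp : (l / ‖z‖) ^ (k + 8) < ((l / ‖z‖) ^ k) ^ s := by
    rw [← Real.rpow_natCast, ← Real.rpow_natCast, ← Real.rpow_mul hq0.le]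
    refine Real.rpow_lt_rpow_of_exponent_gt hq0 hq1 ?_
    push_cast
    linarith
  exact (mul_lt_mul_of_pos_right hexp (h.bilap_pos (hpos _))).trans_le
    (h.rpow_mul_bilap_le hs i (pow_pos hq0 k) fun j => hdom j z hz)

end IsNonnegSolution

end System

namespace IsNonnegSolution

variable {k p : ℕ} {s : ℝ} {U : Fin p → EuclideanSpace ℝ (Fin (k + 4)) → ℝ}

lemma eq_zero_or_exists_rieszPotential_eq (h : IsNonnegSolution s U) (hk : k ≠ 0) (hs : 1 < s)
    (i : Fin p) : U i = 0 ∨ ∃ c > 0, (∀ x, 0 < U i x) ∧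
      (∀ x, Integrable fun z => bilap (U i) z / ‖x - z‖ ^ k) ∧
      rieszPotential k (bilap (U i)) = fun x => c * U i x := by
  have hsuper := h.bilapSupersolution hs i
  obtain ⟨c, hc⟩ := exists_rieszPotential_bilap_eq hk hs
  refine or_iff_not_imp_left.2 fun hne => ?_
  obtain ⟨x₀, hx₀⟩ := Function.ne_iff.1 hne
  have hx₀' : 0 < U i x₀ := (h.nonneg i x₀).lt_of_ne' hx₀
  have hpos (x) : 0 < c * U i x := by
    rw [← (hc _ hsuper x).2]
    exact rieszPotential_pos (continuous_bilap (h.contDiff i)) hsuper.bilap_nonneg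
      (h.bilap_pos hx₀') (hc _ hsuper x).1
  have hc0 : 0 < c := pos_of_mul_pos_left (hpos x₀) hx₀'.le
  exact ⟨c, hc0, fun x => pos_of_mul_pos_right (hpos x) hc0.le, fun x => (hc _ hsuper x).1,
    funext fun x => (hc _ hsuper x).2⟩

lemma eventually_nhdsGT_zero_kelvinDominated (h : IsNonnegSolution s U) (hk : k ≠ 0)
    (hs : 1 < s) (i : Fin p) : ∀ᶠ l in 𝓝[>] (0 : ℝ), KelvinDominated k l (U i) := by
  rcases h.eq_zero_or_exists_rieszPotential_eq hk hs i with hzero | ⟨c, hc, hpos, hint, heq⟩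
  · exact .of_forall fun l => hzero ▸ kelvinDominated_zero k l
  refine eventually_nhdsGT_zero_kelvinDominated_of_div_pow_le hk
    ((h.contDiff i).of_le (by norm_num)) hpos fun r hr => ?_
  obtain ⟨b, hb, hlow⟩ := exists_div_norm_pow_le_rieszPotential
    (continuous_bilap (h.contDiff i)) (fun x => h.bilap_pos (hpos x)) hint hr
  refine ⟨b / c, by positivity, fun y hy => ?_⟩
  have hle := hlow y hy
  rw [heq] at hle
  rw [div_right_comm, div_le_iff₀' hc]
  exact hle

lemma eventually_kelvinDominated (h : IsNonnegSolution s U) (hk : k ≠ 0) (hs : 1 < s)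
    (hsk : s * k < k + 8) {l : ℝ} (hl : 0 < l) (hdom : ∀ j, KelvinDominated k l (U j))
    (i : Fin p) : ∀ᶠ μ in 𝓝 l, KelvinDominated k μ (U i) := by
  rcases h.eq_zero_or_exists_rieszPotential_eq hk hs i with hzero | ⟨c, hc, hpos, hint, heq⟩
  · exact .of_forall fun μ => hzero ▸ kelvinDominated_zero k μ
  have hfinrank : k + (k + 8) = 2 * Module.finrank ℝ (EuclideanSpace ℝ (Fin (k + 4))) := by
    rw [finrank_euclideanSpace_fin]
    ring
  have hgap : KelvinGap k l (rieszPotential k (bilap (U i))) :=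
    kelvinGap_rieszPotential hk hfinrank hl (continuous_bilap (h.contDiff i)) hint fun z hz =>
      h.kelvinTransform_bilap_lt hs hsk hl hdom hpos hz
  rw [heq] at hgap
  exact (KelvinGap.of_const_mul hc hgap).eventually_kelvinDominated hk hl
    ((h.contDiff i).of_le (by norm_num)) (h.nonneg i)

lemma kelvinDominated (h : IsNonnegSolution s U) (hk : k ≠ 0) (hs : 1 < s) (hsk : s * k < k + 8)
    (i : Fin p) {l : ℝ} (hl : 0 < l) : KelvinDominated k l (U i) := by
  suffices hall : ∀ l > 0, ∀ j, KelvinDominated k l (U j) from hall l hl i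
  refine forall_pos_of_frequently_of_eventually ?_ (fun μ hμ hfreq j => ?_) fun μ hμ hdom => ?_
  · exact eventually_all.2 fun j => h.eventually_nhdsGT_zero_kelvinDominated hk hs j
  · exact .of_frequently hμ (h.contDiff j).continuous (hfreq.mono fun _ hν => hν j)
  · exact eventually_all.2 fun j => h.eventually_kelvinDominated hk hs hsk hμ hdom j

lemma eq_apply_zero (h : IsNonnegSolution s U) (hk : k ≠ 0) (hs : 1 < s) (hsk : s * k < k + 8)
    (i : Fin p) (x : EuclideanSpace ℝ (Fin (k + 4))) : U i x = U i 0 := by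
  have hle := le_of_forall_kelvinDominated fun x₀ _ hl =>
    (h.comp_add_left x₀).kelvinDominated hk hs hsk i hl
  exact le_antisymm (hle 0 x) (hle x 0)

lemma eq_zero (h : IsNonnegSolution s U) (hk : k ≠ 0) (hs : 1 < s) (hsk : s * k < k + 8)
    (i : Fin p) : U i = 0 := by
  have hconst : U i = fun _ => U i 0 := funext (h.eq_apply_zero hk hs hsk i)
  by_contra hne
  obtain ⟨x, hx⟩ := Function.ne_iff.1 hne
  have hpos := h.bilap_pos ((h.nonneg i x).lt_of_ne' hx)
  rw [hconst, bilap_const] at hpos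
  exact lt_irrefl 0 hpos

end IsNonnegSolution

/-- Liouville theorem for nonnegative entire solutions of
`Δ² uᵢ = |U|^{s-1} uᵢ` on all of ℝⁿ, for subcritical `1 < s < (n+4)/(n-4)`. -/
theorem statement0 (n p : ℕ) (hn : 5 ≤ n) (hp : 1 ≤ p) (s : ℝ)
    (hs1 : 1 < s) (hs2 : s < ((n : ℝ) + 4) / ((n : ℝ) - 4))
    (U : Fin p → EuclideanSpace ℝ (Fin n) → ℝ)
    (hnonneg : ∀ i x, 0 ≤ U i x)
    (hC4 : ∀ i, ContDiff ℝ 4 (U i))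
    (hpde : ∀ i x, bilap (U i) x = (vnorm U x) ^ (s - 1) * U i x) :
    ∀ i x, U i x = 0 := by
  obtain ⟨k, rfl⟩ : ∃ k, n = k + 4 := ⟨n - 4, by omega⟩
  have hk : k ≠ 0 := by omega
  have hsk : s * k < k + 8 := by
    have hk0 : (0 : ℝ) < k := by positivity
    push_cast at hs2
    rw [add_sub_cancel_right, lt_div_iff₀ hk0] at hs2
    linarith
  have hU : IsNonnegSolution s U := ⟨hnonneg, hC4, hpde⟩
  exact fun i x => congrFun (hU.eq_zero hk hs1 hsk i) x
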